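/- arXiv:0903.2374 — 5 statements merged into one kernel-verified Lean document; each statement's English description precedes it below -/
import Mathlib

section
/- Let Γ be an ordinal and let f : [Γ]² → {0,1} be a partition of the first kind. Define P_f : ℓ₁(Γ) → ℂ by P_f(x) = Σ_{{α,β} ∈ [Γ]², f{α,β} = 1} x_α x_β (this sum converges absolutely for every x ∈ ℓ₁(Γ)). Then every linear subspace Y of ℓ₁(Γ) such that P_f(y) = 0 for all y ∈ Y is separable. -/
noncomputable section

/-- The complex Banach space `ℓ₁(Γ)`. -/
abbrev ell1 (Γ : Type*) : Type _ := lp (fun _ : Γ => ℂ) 1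

/-- `f : [Γ]² → 2` is a *partition of the first kind* if for every uncountable family `A` of
pairwise disjoint subsets of `Γ`, all of some fixed finite cardinality `n` (such a subset is
encoded by the strictly monotone enumeration `Fin n → Γ` of its elements), and for every
`k < n`, there exist `a, b, a', b' ∈ A` with `a ≠ b`, `a' ≠ b'` such that
`f {a(k), b(k)} = 1`, `f {a'(k), b'(k)} = 0`, and `f {a(i), b(j)} = f {a'(i), b'(j)}`
whenever `(i, j) ≠ (k, k)`. -/
def IsPartitionFirstKind {Γ : Type*} [LinearOrder Γ] (f : Sym2 Γ → Fin 2) : Prop :=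
  ∀ (n : ℕ) (A : Set (Fin n → Γ)),
    ¬ A.Countable →
    (∀ a ∈ A, StrictMono a) →
    (A.Pairwise fun a b => Disjoint (Set.range a) (Set.range b)) →
    ∀ k : Fin n,
      ∃ a ∈ A, ∃ b ∈ A, ∃ a' ∈ A, ∃ b' ∈ A,
        a ≠ b ∧ a' ≠ b' ∧
        f s(a k, b k) = 1 ∧ f s(a' k, b' k) = 0 ∧
        ∀ i j : Fin n, (i, j) ≠ (k, k) → f s(a i, b j) = f s(a' i, b' j)

/-- The quadratic functional `P_f(x) = Σ_{{α,β} ∈ [Γ]², f{α,β} = 1} x_α x_β` associated to a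
partition `f : [Γ]² → 2`, where the unordered pairs `{α, β}` with `α < β` are encoded by
ordered pairs. -/
def Pf {Γ : Type*} [LinearOrder Γ] (f : Sym2 Γ → Fin 2) (x : ell1 Γ) : ℂ :=
  ∑' p : Γ × Γ, if p.1 < p.2 ∧ f s(p.1, p.2) = 1 then x p.1 * x p.2 else 0

section helpers
open Classical

lemma pigeon_unc {Γ X : Type*} [Countable X] (S : Set Γ) (hS : ¬ S.Countable) (g : Γ → X) :
    ∃ x, ¬ {γ | γ ∈ S ∧ g γ = x}.Countable := by
  by_contra! h
  apply hS
  refine (Set.countable_iUnion h).mono ?_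
  intro γ hγ
  simp [hγ]

lemma delta_unc {Γ : Type*} [DecidableEq Γ] (m : ℕ) : ∀ (S : Set Γ), ¬ S.Countable → ∀ s : Γ → Finset Γ,
    (∀ γ ∈ S, (s γ).card = m) →
    ∃ J ⊆ S, ¬ J.Countable ∧ ∃ R : Finset Γ, (∀ γ ∈ J, R ⊆ s γ) ∧
      ∀ i ∈ J, ∀ j ∈ J, i ≠ j → Disjoint (s i \ R) (s j \ R) := by
  induction m with
  | zero =>
    intro S hS s hs
    refine ⟨S, subset_rfl, hS, ∅, by simp, ?_⟩
    intro i hi j hj _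
    have := Finset.card_eq_zero.1 (hs i hi)
    simp [this]
  | succ m ih =>
    intro S hS s hs
    by_cases h : ∃ x, ¬ {γ | γ ∈ S ∧ x ∈ s γ}.Countable
    · obtain ⟨x, hx⟩ := h
      obtain ⟨J, hJS, hJ, R, hR, hd⟩ := ih _ hx (fun γ => (s γ).erase x) (by
        intro γ hγ
        rw [Finset.card_erase_of_mem hγ.2, hs γ hγ.1]; rfl)
      refine ⟨J, fun γ hγ => (hJS hγ).1, hJ, insert x R, ?_, ?_⟩
      · intro γ hγ
        exact Finset.insert_subset (hJS hγ).2 ((hR γ hγ).trans (Finset.erase_subset _ _))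
      · intro i hi j hj hij
        have := hd i hi j hj hij
        refine this.mono ?_ ?_ <;>
        · intro y hy
          simp only [Finset.mem_sdiff, Finset.mem_insert, not_or, Finset.mem_erase] at hy ⊢
          tauto
    · push Not at h
      obtain ⟨J, hJ⟩ := zorn_subset {J : Set Γ | J ⊆ S ∧ J.Pairwise fun i j => Disjoint (s i) (s j)}
        (by
          intro c hc hch
          refine ⟨⋃₀ c, ⟨Set.sUnion_subset fun t ht => (hc ht).1, ?_⟩,
            fun t ht => Set.subset_sUnion_of_mem ht⟩
          exact (Set.pairwise_sUnion hch.directedOn).2 fun t ht => (hc ht).2)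
      refine ⟨J, hJ.prop.1, ?_, ∅, by simp, ?_⟩
      · intro hJc
        apply hS
        have hc : (J ∪ ⋃ j ∈ J, ⋃ x ∈ s j, {γ | γ ∈ S ∧ x ∈ s γ}).Countable := by
          refine hJc.union (hJc.biUnion fun j _ => ?_)
          exact Set.Countable.biUnion (s j).countable_toSet fun x _ => h x
        refine hc.mono ?_
        intro γ hγ
        by_contra hn
        simp only [Set.mem_union, Set.mem_iUnion, Set.mem_ofPred_eq, not_or, not_exists] at hn
        have hd : ∀ j ∈ J, Disjoint (s j) (s γ) := by
          intro j hj
          rw [Finset.disjoint_left]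
          intro x hx hx'
          exact hn.2 j hj x hx ⟨hγ, hx'⟩
        refine hn.1 (hJ.le_of_ge (y := insert γ J) ⟨Set.insert_subset hγ hJ.prop.1, ?_⟩
          (Set.subset_insert _ _) (Set.mem_insert _ _))
        refine hJ.prop.2.insert ?_
        intro j hj _
        exact ⟨(hd j hj).symm, hd j hj⟩
      · intro i hi j hj hij
        simpa using hJ.prop.2 hi hj hij

def Fker {Γ : Type*} (f : Sym2 Γ → Fin 2) (α β : Γ) : ℂ :=
  if α ≠ β ∧ f s(α, β) = 1 then 1 else 0

def bfin {Γ : Type*} (f : Sym2 Γ → Fin 2) (s : Γ → Finset Γ) (N : Γ → Γ → ℕ) (v : ℕ → ℂ)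
    (i j : Γ) : ℂ :=
  ∑ α ∈ s i, ∑ β ∈ s j, Fker f α β * (v (N i α) * v (N j β))

lemma core_unc {Γ : Type*} [LinearOrder Γ] (f : Sym2 Γ → Fin 2) (hf : IsPartitionFirstKind f)
    (S : Set Γ) (hS : ¬ S.Countable) (s : Γ → Finset Γ) (hs : ∀ γ ∈ S, γ ∈ s γ)
    (N : Γ → Γ → ℕ) (v : ℕ → ℂ) :
    ∃ i ∈ S, ∃ j ∈ S, ∃ i' ∈ S, ∃ j' ∈ S,
      bfin f s N v i j - bfin f s N v i' j' = v (N i i) ^ 2 := by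
  obtain ⟨m, h1⟩ := pigeon_unc S hS (fun γ => (s γ).card)
  obtain ⟨J, hJS, hJ, R, hR, hd⟩ := delta_unc m _ h1 s (fun γ hγ => hγ.2)
  have h3 : ¬ (J \ (R : Set Γ)).Countable := by
    intro h
    apply hJ
    refine (h.union R.countable_toSet).mono ?_
    intro x hx
    by_cases hxR : x ∈ (R : Set Γ)
    · exact Or.inr hxR
    · exact Or.inl ⟨hx, hxR⟩
  obtain ⟨n, h4⟩ := pigeon_unc _ h3 (fun γ => (s γ \ R).card)
  set J4 := {γ | γ ∈ J \ (R : Set Γ) ∧ (s γ \ R).card = n} with hJ4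
  have hex : ∀ γ ∈ J4, ∃ (a : Fin n → Γ) (k : Fin n), StrictMono a ∧
      (Finset.univ.image a = s γ \ R) ∧ a k = γ := by
    intro γ hγ
    have hr := (s γ \ R).range_orderEmbOfFin hγ.2
    have hm : γ ∈ Set.range ((s γ \ R).orderEmbOfFin hγ.2) := by
      rw [hr]
      simp only [Finset.coe_sdiff]
      exact ⟨hs γ (hJS hγ.1.1).1, hγ.1.2⟩
    obtain ⟨k, hk⟩ := hm
    refine ⟨(s γ \ R).orderEmbOfFin hγ.2, k, OrderEmbedding.strictMono _, ?_, hk⟩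
    apply Finset.coe_injective
    rw [← hr]; simp
  have hne : J4.Nonempty := by
    by_contra h
    rw [Set.not_nonempty_iff_eq_empty] at h
    rw [h] at h4
    exact h4 Set.countable_empty
  obtain ⟨γ0, hγ0⟩ := hne
  haveI : Nonempty Γ := ⟨γ0⟩
  haveI : Nonempty (Fin n) := ⟨(hex γ0 hγ0).choose_spec.choose⟩
  choose! a k ha hk using hex
  obtain ⟨x, h5⟩ := pigeon_unc J4 h4 (fun γ => ((fun ρ : R => N γ ρ, fun t => N γ (a γ t), k γ,
    fun (ρ : R) t => f s((ρ : Γ), a γ t)) : (R → ℕ) × (Fin n → ℕ) × Fin n × (R → Fin n → Fin 2)))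
  obtain ⟨r, c, k0, p⟩ := x
  set J5 := {γ | γ ∈ J4 ∧ _} with hJ5
  have e1 : ∀ γ ∈ J5, ∀ ρ : R, N γ ρ = r ρ := fun γ hγ ρ =>
    congrFun (congrArg (fun z => z.1) hγ.2) ρ
  have e2 : ∀ γ ∈ J5, ∀ t, N γ (a γ t) = c t := fun γ hγ t =>
    congrFun (congrArg (fun z => z.2.1) hγ.2) t
  have e3 : ∀ γ ∈ J5, k γ = k0 := fun γ hγ => (congrArg (fun z => z.2.2.1) hγ.2)
  have e4 : ∀ γ ∈ J5, ∀ (ρ : R) t, f s((ρ : Γ), a γ t) = p ρ t := fun γ hγ ρ t =>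
    congrFun (congrFun (congrArg (fun z => z.2.2.2) hγ.2) ρ) t
  have hak : ∀ γ ∈ J5, a γ k0 = γ := fun γ hγ => by
    have := (hk γ hγ.1).2
    rwa [e3 γ hγ] at this
  have hmem : ∀ γ ∈ J5, ∀ t, a γ t ∈ s γ \ R := fun γ hγ t => by
    rw [← (hk γ hγ.1).1]; simp
  have hdis : ∀ i ∈ J5, ∀ j ∈ J5, i ≠ j → ∀ t u, a i t ≠ a j u := by
    intro i hi j hj hij t u h
    refine Finset.disjoint_left.1 (hd i hi.1.1.1 j hj.1.1.1 hij) (hmem i hi t) ?_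
    rw [h]; exact hmem j hj u
  obtain ⟨_, ⟨i, hi, rfl⟩, _, ⟨j, hj, rfl⟩, _, ⟨i', hi', rfl⟩, _, ⟨j', hj', rfl⟩,
    hab, hab', hf1, hf0, hff⟩ := hf n (a '' J5) (by
      intro h
      apply h5
      refine Set.countable_of_injective_of_countable_image (f := a) ?_ h
      intro x hx y hy hxy
      rw [← hak x hx, ← hak y hy, hxy]) (by
      rintro _ ⟨γ, hγ, rfl⟩
      exact ha γ hγ.1) (by
      rintro _ ⟨i, hi, rfl⟩ _ ⟨j, hj, rfl⟩ hij
      rw [Set.disjoint_left]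
      rintro _ ⟨t, rfl⟩ ⟨u, hu⟩
      exact hdis i hi j hj (fun h => hij (by rw [h])) t u hu.symm) k0
  have hij : i ≠ j := fun h => hab (by rw [h])
  have hij' : i' ≠ j' := fun h => hab' (by rw [h])
  have hsum : ∀ γ ∈ J5, ∀ h : Γ → ℂ, ∑ α ∈ s γ, h α = ∑ ρ : R, h ρ + ∑ t, h (a γ t) := by
    intro γ hγ h
    rw [← Finset.sum_sdiff (hR γ hγ.1.1.1), ← (hk γ hγ.1).1,
      Finset.sum_image (fun _ _ _ _ h => (ha γ hγ.1).injective h), add_comm]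
    congr 1
    exact (Finset.sum_coe_sort R h).symm
  have hneq : ∀ γ ∈ J5, ∀ (ρ : R) t, (ρ : Γ) ≠ a γ t := by
    intro γ hγ ρ t h
    have := hmem γ hγ t
    rw [← h, Finset.mem_sdiff] at this
    exact this.2 ρ.2
  have hexp : ∀ i ∈ J5, ∀ j ∈ J5, i ≠ j → bfin f s N v i j =
      (∑ ρ : R, ((∑ σ : R, Fker f ρ σ * (v (r ρ) * v (r σ))) +
        ∑ t, (if p ρ t = 1 then 1 else 0) * (v (r ρ) * v (c t)))) +
      ((∑ t, ∑ ρ : R, (if p ρ t = 1 then 1 else 0) * (v (c t) * v (r ρ))) +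
      ∑ t, ∑ u, (if f s(a i t, a j u) = 1 then 1 else 0) * (v (c t) * v (c u))) := by
    intro i hi j hj hij
    rw [bfin, hsum i hi]
    simp only [hsum j hj, Finset.sum_add_distrib]
    congr 1
    · congr 1
      · simp only [e1 i hi, e1 j hj]
      · simp only [e1 i hi, e2 j hj, Fker, ne_eq, hneq j hj, not_false_eq_true, true_and, e4 j hj]
    · congr 1
      · simp only [e2 i hi, e1 j hj, Fker, ne_eq, (hneq i hi _ _).symm, not_false_eq_true,
          true_and, Sym2.eq_swap (a := a i _), e4 i hi]
      · simp only [e2 i hi, e2 j hj, Fker, ne_eq, hdis i hi j hj hij, not_false_eq_true, true_and]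
  have hsub : ∀ γ ∈ J5, γ ∈ S := fun γ hγ => (hJS hγ.1.1.1).1
  refine ⟨i, hsub i hi, j, hsub j hj, i', hsub i' hi', j', hsub j' hj', ?_⟩
  rw [hexp i hi j hj hij, hexp i' hi' j' hj' hij', add_sub_add_left_eq_sub,
    add_sub_add_left_eq_sub, ← Finset.sum_sub_distrib]
  simp only [← Finset.sum_sub_distrib]
  rw [Finset.sum_eq_single k0, Finset.sum_eq_single k0]
  · rw [hf1, hf0, ← e2 i hi, hak i hi]; simp; ring
  · intro u _ hu
    rw [hff k0 u (by simpa using hu)]; simp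
  · simp
  · intro t _ ht
    refine Finset.sum_eq_zero fun u _ => ?_
    rw [hff t u (by simp [ht])]; simp
  · simp

/-! analytic part -/

lemma ell1_hasSum {Γ : Type*} (x : ell1 Γ) : HasSum (fun i => ‖x i‖) ‖x‖ := by
  simpa using lp.hasSum_norm (p := 1) (by simp) x

variable {Γ : Type*} [LinearOrder Γ]

def Hker (f : Sym2 Γ → Fin 2) (p : Γ × Γ) : ℂ :=
  if p.1 < p.2 ∧ f s(p.1, p.2) = 1 then 1 else 0

lemma Hker_norm (f : Sym2 Γ → Fin 2) (p : Γ × Γ) : ‖Hker f p‖ ≤ 1 := by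
  unfold Hker; split_ifs <;> simp

lemma sum_prod_norm (x y : ell1 Γ) :
    HasSum (fun p : Γ × Γ => ‖x p.1‖ * ‖y p.2‖) (‖x‖ * ‖y‖) := by
  refine (ell1_hasSum x).mul (ell1_hasSum y) ?_
  exact (ell1_hasSum x).summable.mul_of_nonneg (ell1_hasSum y).summable
    (fun _ => norm_nonneg _) (fun _ => norm_nonneg _)

lemma Hbound (f : Sym2 Γ → Fin 2) (x y : ell1 Γ) (p : Γ × Γ) :
    ‖Hker f p * (x p.1 * y p.2)‖ ≤ ‖x p.1‖ * ‖y p.2‖ := by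
  rw [norm_mul, norm_mul]
  exact mul_le_of_le_one_left (by positivity) (Hker_norm f p)

lemma Hsummable_norm (f : Sym2 Γ → Fin 2) (x y : ell1 Γ) :
    Summable fun p : Γ × Γ => ‖Hker f p * (x p.1 * y p.2)‖ :=
  (sum_prod_norm x y).summable.of_nonneg_of_le (fun _ => norm_nonneg _) (Hbound f x y)

lemma Hsummable (f : Sym2 Γ → Fin 2) (x y : ell1 Γ) :
    Summable fun p : Γ × Γ => Hker f p * (x p.1 * y p.2) :=
  (Hsummable_norm f x y).of_norm

lemma Pf_term (f : Sym2 Γ → Fin 2) (x : ell1 Γ) (p : Γ × Γ) :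
    (if p.1 < p.2 ∧ f s(p.1, p.2) = 1 then x p.1 * x p.2 else 0) =
      Hker f p * (x p.1 * x p.2) := by
  unfold Hker; split_ifs <;> simp

def Lbil (f : Sym2 Γ → Fin 2) : ell1 Γ →ₗ[ℂ] ell1 Γ →ₗ[ℂ] ℂ :=
  LinearMap.mk₂ ℂ (fun x y => ∑' p : Γ × Γ, Hker f p * (x p.1 * y p.2))
    (by
      intro x x' y
      rw [← (Hsummable f x y).tsum_add (Hsummable f x' y)]
      refine tsum_congr fun p => ?_
      simp only [lp.coeFn_add, Pi.add_apply]; ring)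
    (by
      intro c x y
      rw [smul_eq_mul, ← tsum_mul_left]
      refine tsum_congr fun p => ?_
      simp only [lp.coeFn_smul, Pi.smul_apply, smul_eq_mul]; ring)
    (by
      intro x y y'
      rw [← (Hsummable f x y).tsum_add (Hsummable f x y')]
      refine tsum_congr fun p => ?_
      simp only [lp.coeFn_add, Pi.add_apply]; ring)
    (by
      intro c x y
      rw [smul_eq_mul, ← tsum_mul_left]
      refine tsum_congr fun p => ?_
      simp only [lp.coeFn_smul, Pi.smul_apply, smul_eq_mul]; ring)

lemma Lbil_apply (f : Sym2 Γ → Fin 2) (x y : ell1 Γ) :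
    Lbil f x y = ∑' p : Γ × Γ, Hker f p * (x p.1 * y p.2) := rfl

lemma Lbil_norm (f : Sym2 Γ → Fin 2) (x y : ell1 Γ) : ‖Lbil f x y‖ ≤ ‖x‖ * ‖y‖ := by
  rw [Lbil_apply]
  exact tsum_of_norm_bounded (sum_prod_norm x y) (Hbound f x y)

lemma Pf_eq (f : Sym2 Γ → Fin 2) (x : ell1 Γ) : Pf f x = Lbil f x x := by
  rw [Pf, Lbil_apply]
  exact tsum_congr fun p => Pf_term f x p

lemma Lbil_sum (f : Sym2 Γ → Fin 2) (x y : ell1 Γ) (s t : Finset Γ)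
    (hx : ∀ γ ∉ s, x γ = 0) (hy : ∀ γ ∉ t, y γ = 0) :
    Lbil f x y = ∑ α ∈ s, ∑ β ∈ t, Hker f (α, β) * (x α * y β) := by
  rw [Lbil_apply, tsum_eq_sum (s := s ×ˢ t), Finset.sum_product]
  intro p hp
  rw [Finset.mem_product, not_and_or] at hp
  rcases hp with h | h
  · rw [hx _ h]; simp
  · rw [hy _ h]; simp

lemma Bsym_sum (f : Sym2 Γ → Fin 2) (x y : ell1 Γ) (s t : Finset Γ)
    (hx : ∀ γ ∉ s, x γ = 0) (hy : ∀ γ ∉ t, y γ = 0) :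
    Lbil f x y + Lbil f y x = ∑ α ∈ s, ∑ β ∈ t, Fker f α β * (x α * y β) := by
  rw [Lbil_sum f x y s t hx hy, Lbil_sum f y x t s hy hx, Finset.sum_comm (s := t),
    ← Finset.sum_add_distrib]
  refine Finset.sum_congr rfl fun α _ => ?_
  rw [← Finset.sum_add_distrib]
  refine Finset.sum_congr rfl fun β _ => ?_
  have : Fker f α β = Hker f (α, β) + Hker f (β, α) := by
    unfold Fker Hker
    simp only [Sym2.eq_swap (a := β) (b := α)]
    rcases lt_trichotomy α β with h | h | h
    · simp [h, h.ne, h.not_gt]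
    · simp [h]
    · simp [h, h.ne', h.not_gt]
  rw [this]; ring

lemma approx_ell1 (x : ell1 Γ) (δ : ℝ) (hδ : 0 < δ) :
    ∃ (s : Finset Γ) (N : Γ → ℕ) (z : ell1 Γ), ‖x - z‖ < δ ∧ (∀ γ ∉ s, z γ = 0) ∧
      ∀ γ ∈ s, z γ = TopologicalSpace.denseSeq ℂ (N γ) := by
  have h := lp.hasSum_single (p := 1) (by simp) x
  rw [HasSum, SummationFilter.unconditional_filter, Metric.tendsto_atTop] at h
  obtain ⟨s, hs⟩ := h (δ / 2) (by positivity)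
  have hs := hs s le_rfl
  have hN : ∀ γ, ∃ n, ‖x γ - TopologicalSpace.denseSeq ℂ n‖ < δ / (2 * (s.card + 1)) := by
    intro γ
    obtain ⟨n, h⟩ := (TopologicalSpace.denseRange_denseSeq ℂ).exists_dist_lt (x γ)
      (ε := δ / (2 * (s.card + 1))) (by positivity)
    exact ⟨n, by rwa [← dist_eq_norm]⟩
  choose N hN using hN
  have hap : ∀ (w : Γ → ℂ) γ, (∑ i ∈ s, lp.single (E := fun _ : Γ => ℂ) 1 i (w i) : ell1 Γ) γ =
      if γ ∈ s then w γ else 0 := by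
    intro w γ
    rw [lp.coeFn_sum, Finset.sum_apply]
    simp [Pi.single_apply]
  refine ⟨s, N, ∑ i ∈ s, lp.single 1 i (TopologicalSpace.denseSeq ℂ (N i)), ?_, ?_, ?_⟩
  · have h1 : ‖(∑ i ∈ s, lp.single (E := fun _ : Γ => ℂ) 1 i (x i) : ell1 Γ) -
        ∑ i ∈ s, lp.single 1 i (TopologicalSpace.denseSeq ℂ (N i))‖ ≤ δ / 2 := by
      rw [← Finset.sum_sub_distrib]
      refine (norm_sum_le _ _).trans ?_
      have : ∀ i ∈ s, ‖lp.single (E := fun _ : Γ => ℂ) 1 i (x i) -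
          lp.single 1 i (TopologicalSpace.denseSeq ℂ (N i))‖ ≤ δ / (2 * (s.card + 1)) := by
        intro i _
        rw [← lp.single_sub, lp.norm_single (by simp)]
        exact (hN i).le
      refine (Finset.sum_le_sum this).trans ?_
      rw [Finset.sum_const, nsmul_eq_mul, mul_div_assoc', div_le_div_iff₀ (by positivity) (by positivity)]
      nlinarith
    rw [dist_eq_norm, norm_sub_rev] at hs
    calc _ ≤ _ := norm_sub_le_norm_sub_add_norm_sub x (∑ i ∈ s, lp.single 1 i (x i)) _
      _ < δ := by linarith
  · intro γ hγ
    rw [hap (fun i => TopologicalSpace.denseSeq ℂ (N i)), if_neg hγ]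
  · intro γ hγ
    rw [hap (fun i => TopologicalSpace.denseSeq ℂ (N i)), if_pos hγ]

lemma sep_of_countable (Y : Submodule ℂ (ell1 Γ))
    (h : {γ | ∃ y ∈ Y, y γ ≠ 0}.Countable) : TopologicalSpace.IsSeparable (Y : Set (ell1 Γ)) := by
  set S := {γ | ∃ y ∈ Y, y γ ≠ 0} with hS
  have h1 := ((h.image (fun γ => (lp.single 1 γ (1 : ℂ) : ell1 Γ))).isSeparable.span (R := ℂ)).closure
  refine h1.mono ?_
  intro y hy
  have hy' := lp.hasSum_single (p := 1) (by simp) y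
  refine mem_closure_of_tendsto hy' (Filter.Eventually.of_forall fun s => ?_)
  refine Submodule.sum_mem _ fun i _ => ?_
  by_cases hi : y i = 0
  · rw [hi]; simp
  · have : lp.single (E := fun _ : Γ => ℂ) 1 i (y i) = y i • lp.single 1 i (1 : ℂ) := by
      rw [← lp.single_smul]; simp
    rw [this]
    exact Submodule.smul_mem _ _ (Submodule.subset_span ⟨i, ⟨y, hy, hi⟩, rfl⟩)

lemma main_sep (f : Sym2 Γ → Fin 2) (hf : IsPartitionFirstKind f) (Y : Submodule ℂ (ell1 Γ))
    (hY : ∀ y ∈ Y, Pf f y = 0) : TopologicalSpace.IsSeparable (Y : Set (ell1 Γ)) := by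
  apply sep_of_countable
  by_contra hS
  have h1 : ∀ γ ∈ {γ | ∃ y ∈ Y, y γ ≠ 0}, ∃ y ∈ Y, y γ = 1 := by
    rintro γ ⟨y, hy, hne⟩
    exact ⟨(y γ)⁻¹ • y, Y.smul_mem _ hy, by simp [hne]⟩
  choose! y hyY hy1 using h1
  obtain ⟨M, hM⟩ := pigeon_unc _ hS (fun γ => ⌈‖y γ‖⌉₊)
  set S := {γ | γ ∈ {γ | ∃ y ∈ Y, y γ ≠ 0} ∧ ⌈‖y γ‖⌉₊ = M} with hSd
  have hyM : ∀ γ ∈ S, ‖y γ‖ ≤ (M : ℝ) + 1 := fun γ hγ => by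
    have := Nat.le_ceil ‖y γ‖
    rw [hγ.2] at this; linarith
  set K : ℝ := M + 1 with hK
  have hK1 : 1 ≤ K := by simp [hK]
  set δ : ℝ := 1 / (100 * K) with hδd
  have hδ : 0 < δ := by positivity
  have hδK : δ * K = 1 / 100 := by rw [hδd]; field_simp
  have hδ1 : δ ≤ 1 / 100 := by nlinarith
  choose s N z hz hz0 hzN using fun γ => approx_ell1 (y γ) δ hδ
  have hzγ : ∀ γ ∈ S, 1 / 2 ≤ ‖z γ γ‖ := by
    intro γ hγ
    have h2 := lp.norm_apply_le_norm (p := 1) (by simp) (y γ - z γ) γ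
    rw [lp.coeFn_sub, Pi.sub_apply, hy1 γ hγ.1] at h2
    have h3 := norm_sub_norm_le (1 : ℂ) (z γ γ)
    rw [norm_one] at h3
    have := hz γ
    linarith
  have hmem : ∀ γ ∈ S, γ ∈ s γ := by
    intro γ hγ
    by_contra h
    have := hzγ γ hγ
    rw [hz0 γ γ h] at this
    norm_num at this
  have hzM : ∀ γ ∈ S, ‖z γ‖ ≤ 2 * K := fun γ hγ => by
    have h2 := norm_sub_norm_le (z γ) (y γ)
    rw [norm_sub_rev] at h2
    have := hz γ
    have := hyM γ hγ
    linarith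
  obtain ⟨i, hi, j, hj, i', hi', j', hj', heq⟩ := core_unc f hf S hM s hmem N
    (TopologicalSpace.denseSeq ℂ)
  have hb : ∀ i j, bfin f s N (TopologicalSpace.denseSeq ℂ) i j =
      Lbil f (z i) (z j) + Lbil f (z j) (z i) := by
    intro i j
    rw [Bsym_sum f _ _ (s i) (s j) (hz0 i) (hz0 j), bfin]
    refine Finset.sum_congr rfl fun α hα => Finset.sum_congr rfl fun β hβ => ?_
    rw [hzN i α hα, hzN j β hβ]
  have hBY : ∀ i ∈ S, ∀ j ∈ S, Lbil f (y i) (y j) + Lbil f (y j) (y i) = 0 := by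
    intro i hi j hj
    have a1 := hY _ (hyY i hi.1)
    have a2 := hY _ (hyY j hj.1)
    have a3 := hY _ (Y.add_mem (hyY i hi.1) (hyY j hj.1))
    rw [Pf_eq] at a1 a2 a3
    simp only [map_add, LinearMap.add_apply] at a3
    linear_combination a3 - a1 - a2
  have hdiff : ∀ i ∈ S, ∀ j ∈ S, ‖Lbil f (z i) (z j) - Lbil f (y i) (y j)‖ ≤ 3 / 100 := by
    intro i hi j hj
    have : Lbil f (z i) (z j) - Lbil f (y i) (y j) =
        -(Lbil f (y i - z i) (z j) + Lbil f (y i) (y j - z j)) := by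
      simp only [map_sub, LinearMap.sub_apply]; ring
    rw [this, norm_neg]
    have b1 : ‖Lbil f (y i - z i) (z j)‖ ≤ δ * (2 * K) :=
      (Lbil_norm f _ _).trans (mul_le_mul (hz i).le (hzM j hj) (norm_nonneg _) hδ.le)
    have b2 : ‖Lbil f (y i) (y j - z j)‖ ≤ K * δ :=
      (Lbil_norm f _ _).trans (mul_le_mul (hyM i hi) (hz j).le (norm_nonneg _) (by linarith))
    refine (norm_add_le _ _).trans ?_
    linarith
  have hsmall : ∀ i ∈ S, ∀ j ∈ S,
      ‖bfin f s N (TopologicalSpace.denseSeq ℂ) i j‖ ≤ 6 / 100 := by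
    intro i hi j hj
    have : bfin f s N (TopologicalSpace.denseSeq ℂ) i j =
        (Lbil f (z i) (z j) - Lbil f (y i) (y j)) +
        (Lbil f (z j) (z i) - Lbil f (y j) (y i)) := by
      rw [hb]; linear_combination hBY i hi j hj
    rw [this]
    refine (norm_add_le _ _).trans ?_
    have := hdiff i hi j hj
    have := hdiff j hj i hi
    linarith
  have c1 := hsmall i hi j hj
  have c2 := hsmall i' hi' j' hj'
  have c3 := norm_sub_le (bfin f s N (TopologicalSpace.denseSeq ℂ) i j)
    (bfin f s N (TopologicalSpace.denseSeq ℂ) i' j')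
  rw [heq, norm_pow, ← hzN i i (hmem i hi)] at c3
  have c4 := hzγ i hi
  nlinarith

end helpers

/-- If `Γ` is an ordinal (a well-ordered type) and `f : [Γ]² → 2` is a partition of the first
kind, then the defining sum of `P_f` converges absolutely for every `x ∈ ℓ₁(Γ)`, and every
linear subspace `Y ⊆ ℓ₁(Γ)` with `P_f(y) = 0` for all `y ∈ Y` is separable. -/
theorem separable_of_zero_subspace_of_partition_first_kind
    {Γ : Type*} [LinearOrder Γ] [WellFoundedLT Γ]
    (f : Sym2 Γ → Fin 2) (hf : IsPartitionFirstKind f) :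
    (∀ x : ell1 Γ,
      Summable fun p : Γ × Γ =>
        ‖if p.1 < p.2 ∧ f s(p.1, p.2) = 1 then x p.1 * x p.2 else 0‖) ∧
    ∀ Y : Submodule ℂ (ell1 Γ),
      (∀ y ∈ Y, Pf f y = 0) →
      TopologicalSpace.IsSeparable (Y : Set (ell1 Γ)) := by
  refine ⟨fun x => ?_, fun Y hY => main_sep f hf Y hY⟩
  refine (Hsummable_norm f x x).congr fun p => ?_
  rw [Pf_term]

end
end

section
/- Let Ω be an infinite set and let 𝒜 be an almost disjoint family of subsets of Ω such that no member of 𝒜 is covered by the union of finitely many other members of 𝒜 (in particular this holds whenever each A ∈ 𝒜 is infinite and distinct members of 𝒜 have finite intersection). Let ℬ = Ω ⊔ 𝒜 be the disjoint union, and define the continuous quadratic functional P : ℓ₁(ℬ) → ℂ by P(x) = Σ{ x_n x_A : n ∈ Ω, A ∈ 𝒜, n ∈ A } (this sum converges absolutely on ℓ₁(ℬ)). Then the closed subspace X = { x ∈ ℓ₁(ℬ) : x_A = 0 for all A ∈ 𝒜 }, a copy of ℓ₁(Ω), is a maximal zero subspace of P: P vanishes on X, and X is not properly contained in any linear subspace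 on which P vanishes. -/
noncomputable section
open scoped Classical

/-- The quadratic functional `P(x) = Σ { x_n x_A : n ∈ Ω, A ∈ 𝒜, n ∈ A }` on
`ℓ₁(Ω ⊔ 𝒜)`. -/
def Pad {Ω : Type*} (𝒜 : Set (Set Ω)) (x : ell1 (Ω ⊕ ↥𝒜)) : ℂ :=
  ∑' q : Ω × ↥𝒜, if q.1 ∈ (q.2 : Set Ω) then x (Sum.inl q.1) * x (Sum.inr q.2) else 0

/-- The closed subspace `X = { x ∈ ℓ₁(Ω ⊔ 𝒜) : x_A = 0 for all A ∈ 𝒜 }`, a copy of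
`ℓ₁(Ω)` inside `ℓ₁(Ω ⊔ 𝒜)`. -/
def Xad {Ω : Type*} (𝒜 : Set (Set Ω)) : Submodule ℂ (ell1 (Ω ⊕ ↥𝒜)) where
  carrier := {x | ∀ A : ↥𝒜, x (Sum.inr A) = 0}
  add_mem' := by
    intro x y hx hy A
    simp [lp.coeFn_add x y, hx A, hy A]
  zero_mem' := by
    intro A
    simp [lp.coeFn_zero]
  smul_mem' := by
    intro c x hx A
    simp [lp.coeFn_smul c x, hx A]

theorem ad_sum_inl {Ω : Type*} (𝒜 : Set (Set Ω)) (x : ell1 (Ω ⊕ ↥𝒜)) :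
    Summable (fun n : Ω => ‖x (Sum.inl n)‖) ∧ Summable (fun A : ↥𝒜 => ‖x (Sum.inr A)‖) := by
  have h : Summable (fun b => ‖x b‖) := by
    have := (lp.memℓp x).summable (by simp)
    simpa using this
  exact ⟨h.comp_injective Sum.inl_injective, h.comp_injective Sum.inr_injective⟩

theorem ad_summable {Ω : Type*} (𝒜 : Set (Set Ω)) (x : ell1 (Ω ⊕ ↥𝒜)) :
      Summable fun q : Ω × ↥𝒜 =>
        ‖if q.1 ∈ (q.2 : Set Ω) then x (Sum.inl q.1) * x (Sum.inr q.2) else 0‖ := by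
  obtain ⟨h1, h2⟩ := ad_sum_inl 𝒜 x
  refine Summable.of_nonneg_of_le (fun _ => norm_nonneg _) ?_
    (h1.mul_of_nonneg h2 (fun _ => norm_nonneg _) (fun _ => norm_nonneg _))
  intro q
  split_ifs
  · simp
  · simp only [norm_zero]; positivity

theorem ad_single {Ω : Type*} (𝒜 : Set (Set Ω)) (y : ell1 (Ω ⊕ ↥𝒜)) (n : Ω) :
    Pad 𝒜 (y + lp.single 1 (Sum.inl n) (1 : ℂ)) =
      Pad 𝒜 y + ∑' A : ↥𝒜, if n ∈ (A : Set Ω) then y (Sum.inr A) else 0 := by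
  have hinj : Function.Injective (fun A : ↥𝒜 => (n, A)) := fun A B h => (Prod.mk.inj h).2
  have e : (fun q : Ω × ↥𝒜 => if q.1 ∈ (q.2 : Set Ω) then
        (y + lp.single 1 (Sum.inl n) (1 : ℂ) : ell1 (Ω ⊕ ↥𝒜)) (Sum.inl q.1) *
        (y + lp.single 1 (Sum.inl n) (1 : ℂ) : ell1 (Ω ⊕ ↥𝒜)) (Sum.inr q.2) else 0) =
      fun q => (if q.1 ∈ (q.2 : Set Ω) then y (Sum.inl q.1) * y (Sum.inr q.2) else 0) +
        (if q.1 = n then (if n ∈ (q.2 : Set Ω) then y (Sum.inr q.2) else 0) else 0) := by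
    funext ⟨m, A⟩
    simp only [lp.coeFn_add, Pi.add_apply, lp.single_apply]
    by_cases hm : m = n
    · subst hm
      by_cases hA : m ∈ (A : Set Ω) <;> simp [hA, add_mul]
    · simp [hm]
  have hs1 := (ad_summable 𝒜 y).of_norm
  have hs2 : Summable (fun q : Ω × ↥𝒜 =>
      (if q.1 = n then (if n ∈ (q.2 : Set Ω) then y (Sum.inr q.2) else 0) else 0)) := by
    have := (ad_summable 𝒜 (y + lp.single 1 (Sum.inl n) (1 : ℂ))).of_norm
    rw [e] at this
    simpa using this.sub hs1
  unfold Pad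
  rw [e, hs1.tsum_add hs2]
  congr 1
  rw [← hinj.tsum_eq]
  · simp
  · rintro ⟨m, A⟩ h
    by_cases hm : m = n
    · exact ⟨A, by simp [hm]⟩
    · simp [hm] at h

/-- Let `Ω` be an infinite set and `𝒜` an almost disjoint family of subsets of `Ω`
(`|A ∩ A'| < |Ω|` for distinct `A, A' ∈ 𝒜`) such that no member of `𝒜` is covered by the
union of finitely many other members. Then the sum defining the quadratic functional
`P(x) = Σ { x_n x_A : n ∈ Ω, A ∈ 𝒜, n ∈ A }` on `ℓ₁(Ω ⊔ 𝒜)` converges absolutely, `P`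
vanishes on the subspace `X = { x : x_A = 0 for all A ∈ 𝒜 }` (a copy of `ℓ₁(Ω)`), and `X`
is a maximal zero subspace of `P`. -/
theorem ell1_Omega_is_maximal_zero_subspace
    {Ω : Type*} [Infinite Ω] (𝒜 : Set (Set Ω))
    (had : ∀ A ∈ 𝒜, ∀ A' ∈ 𝒜, A ≠ A' →
      Cardinal.mk ↥(A ∩ A') < Cardinal.mk Ω)
    (hcov : ∀ A ∈ 𝒜, ∀ F : Finset (Set Ω), ↑F ⊆ 𝒜 \ {A} → ¬ A ⊆ ⋃₀ (↑F : Set (Set Ω))) :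
    (∀ x : ell1 (Ω ⊕ ↥𝒜),
      Summable fun q : Ω × ↥𝒜 =>
        ‖if q.1 ∈ (q.2 : Set Ω) then x (Sum.inl q.1) * x (Sum.inr q.2) else 0‖) ∧
    (∀ x ∈ Xad 𝒜, Pad 𝒜 x = 0) ∧
    ∀ Y : Submodule ℂ (ell1 (Ω ⊕ ↥𝒜)),
      (∀ y ∈ Y, Pad 𝒜 y = 0) → Xad 𝒜 ≤ Y → Y = Xad 𝒜 := by
  refine ⟨ad_summable 𝒜, ?_, ?_⟩
  · intro x hx
    have hx' : ∀ A : ↥𝒜, x (Sum.inr A) = 0 := hx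
    simp [Pad, hx']
  · intro Y hY hXY
    refine le_antisymm ?_ hXY
    intro y hy A₀
    by_contra hc
    have hz : ∀ n : Ω, ∑' A : ↥𝒜, (if n ∈ (A : Set Ω) then y (Sum.inr A) else 0) = 0 := by
      intro n
      have hmem : (lp.single 1 (Sum.inl n) (1 : ℂ) : ell1 (Ω ⊕ ↥𝒜)) ∈ Xad 𝒜 := by
        intro A
        simp [lp.single_apply]
      have := ad_single 𝒜 y n
      rw [hY _ (Y.add_mem hy (hXY hmem)), hY _ hy, zero_add] at this
      exact this.symm
    have hs := (ad_sum_inl 𝒜 y).2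
    have ht := tendsto_tsum_compl_atTop_zero (fun A : ↥𝒜 => ‖y (Sum.inr A)‖)
    obtain ⟨s, hs1, hs2⟩ := ((ht.eventually (gt_mem_nhds (norm_pos_iff.mpr hc))).and
      (Filter.eventually_ge_atTop {A₀})).exists
    have hA₀ : A₀ ∈ s := hs2 (by simp)
    have := hcov A₀ A₀.2 ((s.erase A₀).image Subtype.val) (by
      intro B hB
      simp only [Finset.coe_image, Set.mem_image, Finset.mem_coe, Finset.mem_erase] at hB
      obtain ⟨C, ⟨h1, h2⟩, rfl⟩ := hB
      exact ⟨C.2, fun h => h1 (Subtype.ext h)⟩)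
    obtain ⟨n, hn, hn'⟩ := Set.not_subset.mp this
    have hg : Summable (fun A : ↥𝒜 => ‖if n ∈ (A : Set Ω) then y (Sum.inr A) else 0‖) := by
      refine Summable.of_nonneg_of_le (fun _ => norm_nonneg _) (fun A => ?_) hs
      split_ifs <;> simp
    have h0 := hg.of_norm.sum_add_tsum_compl (s := s)
    rw [hz n, Finset.sum_eq_single_of_mem A₀ hA₀, if_pos hn] at h0
    · have h1 : ‖y (Sum.inr A₀)‖ ≤ ∑' A : ↥((s : Set ↥𝒜)ᶜ), ‖y (Sum.inr A.1)‖ := by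
        rw [eq_neg_of_add_eq_zero_left h0, norm_neg]
        refine (norm_tsum_le_tsum_norm (hg.subtype _)).trans ?_
        refine Summable.tsum_le_tsum (fun A => ?_) (hg.subtype _) (hs.subtype _)
        split_ifs <;> simp
      exact absurd hs1 (not_lt.mpr h1)
    · intro B hB hne
      rw [if_neg]
      intro hnB
      exact hn' ⟨B, Finset.mem_coe.mpr (Finset.mem_image_of_mem _ (Finset.mem_erase.mpr ⟨hne, hB⟩)), hnB⟩

end
end

section
/- Let n, m be natural numbers with m ≥ 1, and let X be a complex Banach space such that the density of the dual space X* equipped with the weak-star topology is strictly greater than ℶ_{n+m−1}. Then every family of at most ℶ_n continuous homogeneous polynomials on X, each of degree between 1 and m, has a common zero subspace of density at least ℶ_n⁺; moreover, if m ≥ 2, the common zero subspace can be taken of density at least ℶ_{n+1}⁺. -/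
noncomputable section

universe u

/-- The density character of a topological space: the smallest cardinality of a dense
subset. -/
def densityChar (α : Type u) [TopologicalSpace α] : Cardinal.{u} :=
  sInf {c : Cardinal.{u} | ∃ s : Set α, Dense s ∧ Cardinal.mk s = c}

namespace AuxZ

open Cardinal

theorem densityChar_le {α : Type u} [TopologicalSpace α] {s : Set α} (hs : Dense s) :
    densityChar α ≤ #s := csInf_le' ⟨s, hs, rfl⟩

theorem le_densityChar_of_separated {α T : Type u} [PseudoMetricSpace α] (y : T → α)
    (hy : ∀ s t, s ≠ t → 1 ≤ dist (y s) (y t)) : #T ≤ densityChar α := by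
  refine le_csInf ⟨_, Set.univ, dense_univ, rfl⟩ ?_
  rintro _ ⟨s, hs, rfl⟩
  have h : ∀ t, ∃ z : s, dist (y t) z < 1/2 := by
    intro t
    obtain ⟨z, hz, h⟩ := hs.exists_dist_lt (y t) (show (0:ℝ) < 1/2 by norm_num)
    exact ⟨⟨z, hz⟩, h⟩
  choose f hf using h
  refine mk_le_of_injective (f := f) ?_
  intro a b hab
  by_contra hne
  have h1 := hy a b hne
  have h2 := hf a
  have h3 := hf b
  rw [← hab] at h3
  have := dist_triangle_right (y a) (y b) (f a : α)
  linarith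

theorem exists_functional_of_not_dense {E : Type u} [AddCommGroup E] [TopologicalSpace E]
    [IsTopologicalAddGroup E] [Module ℝ E] [Module ℂ E] [IsScalarTower ℝ ℂ E]
    [ContinuousSMul ℂ E] [LocallyConvexSpace ℝ E] (S : Submodule ℂ E)
    (φ : E) (hφ : φ ∉ closure (S : Set E)) :
    ∃ f : StrongDual ℂ E, (∀ a ∈ S, f a = 0) ∧ f φ ≠ 0 := by
  have : ContinuousSMul ℝ E := IsScalarTower.continuousSMul ℂ
  obtain ⟨f, u, h1, h2⟩ := RCLike.geometric_hahn_banach_closed_point (𝕜 := ℂ)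
    (s := (S.topologicalClosure : Set E))
    (S.topologicalClosure.restrictScalars ℝ).convex (Submodule.isClosed_topologicalClosure _) hφ
  have hz : ∀ a ∈ S.topologicalClosure, f a = 0 := by
    intro a ha
    by_contra hne
    have := h1 (((u : ℂ) / f a) • a) (S.topologicalClosure.smul_mem _ ha)
    rw [map_smul, smul_eq_mul, div_mul_cancel₀ _ hne] at this
    simp at this
  refine ⟨f, fun a ha => hz a (Submodule.le_topologicalClosure _ ha), fun h => ?_⟩
  have h3 := h1 0 S.topologicalClosure.zero_mem
  rw [h] at h2
  simp at h2 h3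
  linarith

theorem span_dense_of_separating_bilin {E F : Type u} [AddCommGroup E] [Module ℂ E]
    [Module ℝ E] [IsScalarTower ℝ ℂ E] [AddCommGroup F] [Module ℂ F] (B : E →ₗ[ℂ] F →ₗ[ℂ] ℂ)
    (G : Set (WeakBilin B)) (hG : ∀ x : F, (∀ f ∈ G, B f x = 0) → x = 0) :
    Dense (Submodule.span ℂ G : Set (WeakBilin B)) := by
  intro φ
  by_contra hφ
  have : IsScalarTower ℝ ℂ (WeakBilin B) :=
    inferInstanceAs (IsScalarTower ℝ ℂ E)
  obtain ⟨f, h1, h2⟩ := exists_functional_of_not_dense (Submodule.span ℂ G) φ hφ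
  obtain ⟨x, hx⟩ := LinearMap.dualEmbedding_surjective B f
  have hfx : ∀ a : WeakBilin B, f a = B a x := fun a => by rw [← hx]; rfl
  have hx0 : x = 0 := by
    apply hG
    intro g hg
    rw [← hfx]
    exact h1 _ (Submodule.subset_span hg)
  apply h2
  rw [hfx, hx0, map_zero]

theorem span_dense_of_separating {X : Type u} [NormedAddCommGroup X] [NormedSpace ℂ X]
    (F : Set (WeakDual ℂ X)) (hF : ∀ x : X, (∀ f ∈ F, f x = 0) → x = 0) :
    Dense (Submodule.span ℂ F : Set (WeakDual ℂ X)) :=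
  span_dense_of_separating_bilin (topDualPairing ℂ X) F hF

theorem densityChar_weakDual_le {X : Type u} [NormedAddCommGroup X] [NormedSpace ℂ X]
    (F : Set (WeakDual ℂ X)) (hF : ∀ x : X, (∀ f ∈ F, f x = 0) → x = 0)
    (ν : Cardinal.{u}) (hν : ℵ₀ ≤ ν) (hc : #F ≤ ν) : densityChar (WeakDual ℂ X) ≤ ν := by
  obtain ⟨Q, hQc, hQ⟩ := TopologicalSpace.exists_countable_dense ℂ
  let G : Set (WeakDual ℂ X) := Set.range fun p : Q × F => (p.1 : ℂ) • (p.2 : WeakDual ℂ X)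
  let D := AddSubmonoid.closure G
  have hG : #G ≤ ν := by
    have h := mk_range_le_lift (f := fun p : Q × F => (p.1 : ℂ) • (p.2 : WeakDual ℂ X))
    simp only [lift_id, mk_prod, lift_uzero] at h
    have hq : lift.{u} #Q ≤ ℵ₀ := by
      rw [lift_le_aleph0]; exact mk_le_aleph0_iff.2 hQc
    calc #G ≤ _ := by simpa using h
      _ ≤ ℵ₀ * ν := by gcongr
      _ ≤ ν := by rw [aleph0_mul_eq hν]
  have hD : #D ≤ ν := by
    have e : (D : Set (WeakDual ℂ X)) = Set.range fun l : List G => (List.map Subtype.val l).sum := by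
      show ((AddSubmonoid.closure G : AddSubmonoid _) : Set (WeakDual ℂ X)) = _
      rw [AddSubmonoid.closure_eq_mrange]
      ext z
      simp only [AddMonoidHom.coe_mrange, Set.mem_range]
      constructor
      · rintro ⟨l, rfl⟩
        exact ⟨FreeAddMonoid.toList l, (FreeAddMonoid.lift_apply _ _).symm⟩
      · rintro ⟨l, rfl⟩
        exact ⟨FreeAddMonoid.ofList l, (FreeAddMonoid.lift_apply _ _)⟩
    have : #(D : Set (WeakDual ℂ X)) ≤ ν := by
      rw [e]
      exact mk_range_le.trans ((mk_list_le_max _).trans (max_le hν hG))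
    exact this
  have hdense : Dense (D : Set (WeakDual ℂ X)) := by
    have hcl : (Submodule.span ℂ F).toAddSubmonoid ≤ D.topologicalClosure := by
      rw [Submodule.span_eq_closure, AddSubmonoid.closure_le]
      rintro _ ⟨c, -, f, hf, rfl⟩
      have hcont : Continuous fun c : ℂ => c • f := by
        fun_prop
      have : c • f ∈ closure ((fun c : ℂ => c • f) '' Q) :=
        (image_closure_subset_closure_image hcont) ⟨c, hQ c, rfl⟩
      refine closure_mono ?_ this
      rintro _ ⟨q, hq, rfl⟩
      exact AddSubmonoid.subset_closure ⟨(⟨q, hq⟩, ⟨f, hf⟩), rfl⟩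
    intro φ
    have h := span_dense_of_separating F hF φ
    have := closure_mono (s := (Submodule.span ℂ F : Set (WeakDual ℂ X))) hcl h
    have h2 : φ ∈ closure (closure (D : Set (WeakDual ℂ X))) := this
    rwa [closure_closure] at h2
  exact (densityChar_le hdense).trans hD

variable {X : Type u} [NormedAddCommGroup X] [NormedSpace ℂ X]

/-- `P` is a continuous homogeneous polynomial of degree `d`. -/
def IsHP (d : ℕ) (P : X → ℂ) : Prop :=
  ∃ (J : Type) (_ : Fintype J) (A : ContinuousMultilinearMap ℂ (fun _ : J => X) ℂ),
    Fintype.card J = d ∧ ∀ x, P x = A fun _ => x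

/-- Families of at most `ν` polynomials of degrees in `[1,k]` have a nonzero common zero. -/
def HasZeros (X : Type u) [NormedAddCommGroup X] [NormedSpace ℂ X] (ν : Cardinal.{u}) (k : ℕ) :
    Prop :=
  ∀ F : Set (X → ℂ), #F ≤ ν → (∀ P ∈ F, ∃ d, 1 ≤ d ∧ d ≤ k ∧ IsHP d P) →
    ∃ x : X, x ≠ 0 ∧ ∀ P ∈ F, P x = 0

theorem isHP_clm (f : X →L[ℂ] ℂ) : IsHP 1 (fun x => f x) :=
  ⟨Unit, inferInstance, ContinuousMultilinearMap.ofSubsingleton ℂ X ℂ () f, by simp, fun x => by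
    simp⟩

theorem IsHP.exists_clm {P : X → ℂ} (h : IsHP 1 P) : ∃ f : WeakDual ℂ X, ∀ x, P x = f x := by
  obtain ⟨J, _, A, hJ, hP⟩ := h
  obtain ⟨j, hj⟩ := Fintype.card_eq_one_iff.1 hJ
  have : Subsingleton J := ⟨fun a b => (hj a).trans (hj b).symm⟩
  obtain ⟨f, rfl⟩ := (ContinuousMultilinearMap.ofSubsingleton ℂ X ℂ j).surjective A
  refine ⟨StrongDual.toWeakDual f, fun x => ?_⟩
  rw [hP]
  rfl

theorem IsHP.smul_zero {d : ℕ} {P : X → ℂ} (h : IsHP d P) (c : ℂ) (x : X) (hx : P x = 0) :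
    P (c • x) = 0 := by
  obtain ⟨J, _, A, hJ, hP⟩ := h
  rw [hP] at hx ⊢
  have := A.map_smul_univ (fun _ => c) (fun _ => x)
  rw [this, hx, _root_.smul_zero]

theorem hasZeros_one (ν : Cardinal.{u}) (hν : ℵ₀ ≤ ν) (h : ν < densityChar (WeakDual ℂ X)) :
    HasZeros X ν 1 := by
  intro F hF hd
  by_contra! hcon
  have h1 : ∀ P : F, ∃ f : WeakDual ℂ X, ∀ x, P.1 x = f x := by
    rintro ⟨P, hP⟩
    obtain ⟨d, h1, h2, h3⟩ := hd P hP
    obtain rfl : d = 1 := by omega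
    exact h3.exists_clm
  choose g hg using h1
  refine h.not_ge (densityChar_weakDual_le (Set.range g) ?_ ν hν (mk_range_le.trans hF))
  intro x hx
  by_contra hne
  obtain ⟨P, hP, hPx⟩ := hcon x hne
  exact hPx ((hg ⟨P, hP⟩ x).trans (hx _ ⟨_, rfl⟩))

theorem exists_seq (ν : Cardinal.{u}) (hν : ℵ₀ ≤ ν) (k : ℕ) (hk : 1 ≤ k)
    (hZ : HasZeros X ν k) (G : Set X → Set (X → ℂ)) (hG : ∀ L : Set X, #L ≤ ν → #(G L) ≤ ν)
    (hdeg : ∀ L, ∀ P ∈ G L, ∃ d, 1 ≤ d ∧ d ≤ k ∧ IsHP d P) :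
    ∃ (Λ : Type u) (_ : LinearOrder Λ) (x : Λ → X) (f : Λ → X →L[ℂ] ℂ), #Λ = Order.succ ν ∧
      (∀ α, ‖f α‖ ≤ 1) ∧ (∀ α, f α (x α) = 1) ∧ (∀ α β, β < α → f β (x α) = 0) ∧
      ∀ α, ∀ P ∈ G (x '' Set.Iio α), P (x α) = 0 := by
  have hnorm : ∀ x : X, ∃ g : X →L[ℂ] ℂ, ‖g‖ ≤ 1 ∧ g x = ‖x‖ := fun x => by
    obtain ⟨g, h1, h2⟩ := exists_dual_vector'' ℂ x
    exact ⟨g, h1, h2⟩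
  choose g hg1 hg2 using hnorm
  have hpick : ∀ L : Set X, ∃ x : X, #L ≤ ν → ‖x‖ = 1 ∧ (∀ y ∈ L, g y x = 0) ∧
      ∀ P ∈ G L, P x = 0 := by
    intro L
    by_cases hL : #L ≤ ν
    swap
    · exact ⟨0, fun h => absurd h hL⟩
    have hdeg' : ∀ P ∈ ((fun y => (fun x => g y x)) '' L ∪ G L : Set (X → ℂ)),
        ∃ d, 1 ≤ d ∧ d ≤ k ∧ IsHP d P := by
      rintro P (⟨y, -, rfl⟩ | hP)
      · exact ⟨1, le_rfl, hk, isHP_clm _⟩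
      · exact hdeg L P hP
    obtain ⟨x, hx, h⟩ := hZ ((fun y => (fun x => g y x)) '' L ∪ G L) (by
      refine (mk_union_le _ _).trans ?_
      refine (add_le_add (mk_image_le.trans hL) (hG L hL)).trans ?_
      rw [add_eq_self hν]) hdeg'
    have h' : ∀ P ∈ ((fun y => (fun x => g y x)) '' L ∪ G L : Set (X → ℂ)),
        P (((‖x‖⁻¹ : ℝ) : ℂ) • x) = 0 := by
      intro P hP
      obtain ⟨d, _, _, hd⟩ := hdeg' P hP
      exact hd.smul_zero _ _ (h P hP)
    refine ⟨((‖x‖⁻¹ : ℝ) : ℂ) • x, fun _ => ⟨?_, fun y hy => ?_, fun P hP => ?_⟩⟩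
    · rw [norm_smul]
      have : ‖x‖ ≠ 0 := norm_ne_zero_iff.2 hx
      simp [this]
    · exact h' _ (Or.inl ⟨y, hy, rfl⟩)
    · exact h' _ (Or.inr hP)
  choose pick hpick using hpick
  let Λ := (Order.succ ν).ord.ToType
  let x : Λ → X := (wellFounded_lt (α := Λ)).fix
    (fun α ih => pick (Set.range fun β : Set.Iio α => ih β.1 β.2))
  have hx : ∀ α, x α = pick (x '' Set.Iio α) := by
    intro α
    have := (wellFounded_lt (α := Λ)).fix_eq
      (fun α ih => pick (Set.range fun β : Set.Iio α => ih β.1 β.2)) α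
    rw [Set.image_eq_range]
    exact this
  have hcard : ∀ α : Λ, #(x '' Set.Iio α) ≤ ν := by
    intro α
    refine mk_image_le.trans ?_
    have := mk_Iio_toType_ord_lt α
    exact Order.lt_succ_iff.1 this
  have hp := fun α => hpick _ (hcard α)
  simp only [← hx] at hp
  refine ⟨Λ, inferInstance, x, fun α => g (x α), by simp [Λ], fun α => hg1 _, fun α => ?_,
    fun α β h => ?_, fun α => (hp α).2.2⟩
  · rw [hg2, (hp α).1]; simp
  · exact (hp α).2.1 _ ⟨β, h, rfl⟩

theorem vanish_span {J T : Type*} [Fintype J] (A : ContinuousMultilinearMap ℂ (fun _ : J => X) ℂ)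
    (y : T → X) (h : ∀ j : J → T, A (fun l => y (j l)) = 0) (v : X)
    (hv : v ∈ Submodule.span ℂ (Set.range y)) : A (fun _ => v) = 0 := by
  classical
  obtain ⟨c, rfl⟩ := Finsupp.mem_span_range_iff_exists_finsupp.1 hv
  unfold Finsupp.sum
  rw [A.map_sum_finset (fun _ i => c i • y i) (fun _ => c.support)]
  refine Finset.sum_eq_zero fun r _ => ?_
  have := A.map_smul_univ (fun l => c (r l)) (fun l => y (r l))
  rw [this, h, smul_zero]

theorem zero_subspace (μ ν : Cardinal.{u}) (hμ : ℵ₀ ≤ μ) (hμν : 2 ^ μ = ν) (k : ℕ) (hk : 1 ≤ k)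
    (hZ : HasZeros X ν k) (ι : Type u) (hι : #ι ≤ μ) (J : ι → Type) [∀ i, Fintype (J i)]
    (hd : ∀ i, 1 ≤ Fintype.card (J i) ∧ Fintype.card (J i) ≤ k + 1)
    (A : ∀ i, ContinuousMultilinearMap ℂ (fun _ : J i => X) ℂ) :
    ∃ Y : Submodule ℂ X, (∀ i, ∀ y ∈ Y, A i (fun _ => y) = 0) ∧
      Order.succ ν ≤ densityChar Y := by
  classical
  have hμν' : μ ≤ ν := by rw [← hμν]; exact (cantor μ).le
  have hν : ℵ₀ ≤ ν := hμ.trans hμν'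
  let G : Set X → Set (X → ℂ) := fun L => Set.range
    fun p : Σ i : ι, {S : Finset (J i) // S.Nonempty ∧ S ≠ Finset.univ} × (J i → L) =>
      fun x => A p.1 (fun j => if j ∈ p.2.1.1 then x else (p.2.2 j : X))
  obtain ⟨Λ, _, x, f, hΛ, hf1, hfx, hf0, hGx⟩ := exists_seq ν hν k hk hZ G (by
    intro L hL
    refine mk_range_le.trans ?_
    rw [mk_sigma]
    refine (sum_le_sum _ (fun _ => ν) fun i => ?_).trans ?_
    · rw [mk_prod, mk_arrow]
      simp only [lift_uzero, lift_id, lift_umax]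
      refine (mul_le_mul' (lift_le_aleph0.2 mk_le_aleph0) (?_ : _ ≤ ν)).trans ?_
      · rw [mk_fintype (J i)]
        simp only [lift_natCast, power_natCast]
        exact (pow_le_pow_left' hL _).trans (power_nat_le hν)
      · rw [aleph0_mul_eq hν]
    · rw [sum_const']
      exact (mul_le_mul' (hι.trans hμν') le_rfl).trans (mul_eq_self hν).le) (by
    rintro L _ ⟨⟨i, ⟨S, hS1, hS2⟩, z⟩, rfl⟩
    refine ⟨S.card, hS1.card_pos, ?_, {j // j ∈ S}, inferInstance,
      ⟨(A i).toMultilinearMap.domDomRestrict (fun j => j ∈ S) (fun j => (z j.1 : X)), ?_⟩,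
      by simp, fun x => ?_⟩
    · have := Finset.card_lt_univ_of_notMem (s := S) (x := ?_) ?_
      · have := (hd i).2; omega
      · exact (by simpa [Finset.eq_univ_iff_forall] using hS2 : ∃ x, x ∉ S).choose
      · exact (by simpa [Finset.eq_univ_iff_forall] using hS2 : ∃ x, x ∉ S).choose_spec
    · refine (A i).cont.comp (continuous_pi fun j => ?_)
      by_cases h : j ∈ S
      · simp only [h, dif_pos]; fun_prop
      · simp only [h, dif_neg, not_false_iff]; fun_prop
    · show A i _ = A i _
      congr 1)
  -- mixed terms vanish
  have hmix : ∀ i (α : J i → Λ), (∃ a b, α a ≠ α b) → A i (fun j => x (α j)) = 0 := by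
    rintro i α ⟨a, b, hab⟩
    have : Nonempty (J i) := ⟨a⟩
    obtain ⟨j0, hj0⟩ := Finite.exists_max α
    obtain ⟨j1, hj1⟩ : ∃ j1, α j1 < α j0 := by
      by_contra! hcon
      exact hab ((le_antisymm (hj0 a) (hcon a)).trans (le_antisymm (hj0 b) (hcon b)).symm)
    have := hGx (α j0) _ ⟨⟨i, ⟨Finset.univ.filter (fun j => α j = α j0),
      ⟨j0, by simp⟩, fun h => ?_⟩,
      fun j => if h : α j < α j0 then ⟨x (α j), ⟨_, h, rfl⟩⟩ else ⟨x (α j1), ⟨_, hj1, rfl⟩⟩⟩, rfl⟩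
    · rw [← this]
      simp only
      congr 1
      ext j
      by_cases h : α j = α j0
      · simp [h]
      · have h' : α j < α j0 := lt_of_le_of_ne (hj0 j) h
        simp [h, h']
    · have := Finset.mem_univ j1
      rw [← h] at this
      simp at this
      exact hj1.ne this
  -- pigeonhole
  have hcol : #(ι → ℂ) ≤ ν := by
    rw [mk_arrow, mk_complex, lift_continuum, lift_uzero, ← two_power_aleph0, ← power_mul, ← hμν]
    refine power_le_power_left two_ne_zero ?_
    exact (mul_le_mul' le_rfl hι).trans (aleph0_mul_eq hμ).le
  obtain ⟨c, hc⟩ := infinite_pigeonhole (fun (α : Λ) (i : ι) => A i (fun _ => x α))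
    (by rw [hΛ]; exact hν.trans (Order.le_succ ν))
    (by rw [hΛ, (isRegular_succ hν).cof_ord]; exact Order.lt_succ_of_le hcol)
  set T := (fun (α : Λ) (i : ι) => A i (fun _ => x α)) ⁻¹' {c} with hT
  have hTc : ∀ (t : T) (i : ι), A i (fun _ => x t.1) = c i := fun t i => congrFun t.2 i
  obtain ⟨e⟩ : Nonempty (T × Fin (k + 2) ≃ T) := by
    have : #(T × Fin (k + 2)) = #T := by
      rw [mk_prod]
      simp only [lift_uzero, mk_fin, lift_natCast]
      refine mul_eq_left ?_ ?_ ?_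
      · rw [hc, hΛ]; exact hν.trans (Order.le_succ ν)
      · rw [hc, hΛ]; exact (natCast_lt_aleph0.le).trans (hν.trans (Order.le_succ ν))
      · simp
    exact Cardinal.eq.1 this
  let ω : ℂ := Complex.exp (2 * Real.pi * Complex.I / (k + 2 : ℕ))
  have hω : IsPrimitiveRoot ω (k + 2) := Complex.isPrimitiveRoot_exp (k + 2) (by omega)
  let y : T → X := fun t => ∑ r : Fin (k + 2), ω ^ (r : ℕ) • x (e (t, r)).1
  refine ⟨Submodule.span ℂ (Set.range y), fun i v hv => vanish_span (A i) y ?_ v hv, ?_⟩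
  · intro j
    have hexp : A i (fun l => y (j l)) = ∑ r : J i → Fin (k + 2),
        (∏ l, ω ^ (r l : ℕ)) * A i (fun l => x (e (j l, r l)).1) := by
      rw [show (fun l => y (j l)) = fun l => ∑ r : Fin (k + 2), ω ^ (r : ℕ) • x (e (j l, r)).1
        from rfl, (A i).map_sum]
      refine Finset.sum_congr rfl fun r _ => ?_
      exact (A i).map_smul_univ (fun l => ω ^ (r l : ℕ)) (fun l => x (e (j l, r l)).1)
    rw [hexp]
    have hz : ∀ (r : J i → Fin (k + 2)) (a b : J i), (j a, r a) ≠ (j b, r b) →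
        (∏ l, ω ^ (r l : ℕ)) * A i (fun l => x (e (j l, r l)).1) = 0 := by
      intro r a b hab
      rw [hmix i (fun l => (e (j l, r l)).1) ⟨a, b, fun h => hab (e.injective (Subtype.ext h))⟩,
        mul_zero]
    by_cases hj : ∃ a b, j a ≠ j b
    · obtain ⟨a, b, hab⟩ := hj
      exact Finset.sum_eq_zero fun r _ => hz r a b fun h => hab (congrArg Prod.fst h)
    push Not at hj
    obtain ⟨l0⟩ : Nonempty (J i) := Fintype.card_pos_iff.1 (hd i).1
    have hsum : ∑ s : Fin (k + 2), (ω ^ Fintype.card (J i)) ^ (s : ℕ) * c i =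
        ∑ r : J i → Fin (k + 2), (∏ l, ω ^ (r l : ℕ)) * A i (fun l => x (e (j l, r l)).1) := by
      refine Finset.sum_of_injOn (fun s _ => s) ?_ ?_ ?_ ?_
      · intro s _ s' _ h; exact congrFun h l0
      · intro s _; simp
      · intro r _ hr
        have : ∃ a, r a ≠ r l0 := by
          by_contra! hcon
          exact hr ⟨r l0, by simp, (funext hcon).symm⟩
        obtain ⟨a, ha⟩ := this
        exact hz r a l0 fun h => ha (congrArg Prod.snd h)
      · intro s _
        have : (fun l => x (e (j l, s)).1) = fun _ => x (e (j l0, s)).1 := by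
          ext l; rw [hj l l0]
        rw [this, hTc]
        simp [← pow_mul, mul_comm]
    rw [← hsum, ← Finset.sum_mul, Fin.sum_univ_eq_sum_range
      (fun s => (ω ^ Fintype.card (J i)) ^ s), geom_sum_eq, ← pow_mul, mul_comm (Fintype.card _),
      pow_mul, hω.pow_eq_one]
    · simp
    · have h1 := (hd i).1
      exact hω.pow_ne_one_of_pos_of_lt (by omega) (by have := (hd i).2; omega)
  · rw [← hΛ, ← hc]
    refine le_densityChar_of_separated
      (fun t => ⟨y t, Submodule.subset_span ⟨t, rfl⟩⟩) fun s t hst => ?_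
    rw [Subtype.dist_eq, dist_eq_norm]
    show 1 ≤ ‖y s - y t‖
    let g : Bool × Fin (k + 2) → Λ := fun p => (e (bif p.1 then s else t, p.2)).1
    have hg : Function.Injective g := by
      rintro ⟨b, r⟩ ⟨b', r'⟩ h
      have := e.injective (Subtype.ext h)
      cases b <;> cases b' <;> simp_all [eq_comm]
    have hy : y s - y t = ∑ p : Bool × Fin (k + 2),
        ((bif p.1 then (1 : ℂ) else -1) * ω ^ (p.2 : ℕ)) • x (g p) := by
      rw [Fintype.sum_prod_type]
      simp [y, g, sub_eq_add_neg]
    obtain ⟨p, hp⟩ := Finite.exists_min g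
    have hfy : f (g p) (y s - y t) = (bif p.1 then (1 : ℂ) else -1) * ω ^ (p.2 : ℕ) := by
      rw [hy, map_sum, Finset.sum_eq_single p]
      · rw [map_smul, hfx]; simp
      · intro q _ hq
        rw [map_smul, hf0 _ _ (lt_of_le_of_ne (hp q) fun h => hq (hg h).symm), smul_zero]
      · simp
    have hn : ‖f (g p) (y s - y t)‖ = 1 := by
      rw [hfy, norm_mul, norm_pow, hω.norm'_eq_one (by omega)]
      cases p.1 <;> simp
    rw [← hn]
    refine ((f (g p)).le_opNorm _).trans ?_
    exact mul_le_of_le_one_left (norm_nonneg _) (hf1 _)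

theorem beth_nat_succ (n : ℕ) : (2 : Cardinal.{u}) ^ beth (n : Ordinal.{u}) =
    beth ((n + 1 : ℕ) : Ordinal.{u}) := by
  rw [← beth_succ]; congr 1

theorem hasZeros_beth (m : ℕ) (hm : 1 ≤ m) : ∀ n : ℕ,
    beth ((n + m - 1 : ℕ) : Ordinal.{u}) < densityChar (WeakDual ℂ X) →
    HasZeros X (beth (n : Ordinal.{u})) m := by
  induction m, hm using Nat.le_induction with
  | base => intro n h; exact hasZeros_one _ (aleph0_le_beth _) (by simpa using h)
  | succ m hm ih =>
    intro n h F hF hd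
    have h1 := ih (n + 1) (by rwa [show n + 1 + m - 1 = n + (m + 1) - 1 by omega])
    have hd' : ∀ P : F, ∃ (J : Type) (_ : Fintype J)
        (A : ContinuousMultilinearMap ℂ (fun _ : J => X) ℂ),
        (1 ≤ Fintype.card J ∧ Fintype.card J ≤ m + 1) ∧ ∀ x, P.1 x = A fun _ => x := by
      rintro ⟨P, hP⟩
      obtain ⟨d, h1, h2, J, iJ, A, rfl, hA⟩ := hd P hP
      exact ⟨J, iJ, A, ⟨h1, h2⟩, hA⟩
    choose J iJ A hJ hA using hd'
    obtain ⟨Y, hY, hdens⟩ := zero_subspace _ _ (aleph0_le_beth _) (beth_nat_succ n) m hm h1 F hF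
      J hJ A
    have : ∃ v ∈ Y, v ≠ 0 := by
      by_contra! hcon
      have hs : Subsingleton Y := ⟨fun a b => Subtype.ext ((hcon a a.2).trans (hcon b b.2).symm)⟩
      have h2 : densityChar Y ≤ 1 :=
        (densityChar_le dense_univ).trans (mk_univ.le.trans (le_one_iff_subsingleton.2 hs))
      have h3 := (aleph0_le_beth ((n + 1 : ℕ) : Ordinal.{u})).trans
        ((Order.le_succ _).trans (hdens.trans h2))
      exact h3.not_gt one_lt_aleph0
    obtain ⟨v, hv, hv0⟩ := this
    exact ⟨v, hv0, fun P hP => (hA ⟨P, hP⟩ v).trans (hY _ v hv)⟩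

end AuxZ

/-- Let `n, m` be natural numbers with `m ≥ 1` and let `X` be a complex Banach space whose
dual `X*`, with the weak-star topology, has density character `> ℶ_{n+m-1}`. Then every
family of at most `ℶ_n` continuous homogeneous polynomials on `X` (given by continuous
symmetric multilinear forms) of degrees between `1` and `m` has a common zero subspace of
density at least `ℶ_n⁺`; moreover, if `m ≥ 2`, it has a common zero subspace of density at
least `ℶ_{n+1}⁺`. -/
theorem exists_common_zero_subspace_of_large_weak_star_density
    {X : Type u} [NormedAddCommGroup X] [NormedSpace ℂ X] [CompleteSpace X]
    (n m : ℕ) (hm : 1 ≤ m)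
    (hX : Cardinal.beth (↑(n + m - 1) : Ordinal) < densityChar (WeakDual ℂ X))
    (ι : Type u) (hι : Cardinal.mk ι ≤ Cardinal.beth (↑n : Ordinal))
    (d : ι → ℕ) (hd : ∀ i, 1 ≤ d i ∧ d i ≤ m)
    (A : ∀ i, ContinuousMultilinearMap ℂ (fun _ : Fin (d i) => X) ℂ)
    (hsymm : ∀ i (x : Fin (d i) → X) (σ : Equiv.Perm (Fin (d i))), A i (x ∘ σ) = A i x) :
    (∃ Y : Submodule ℂ X,
      (∀ i, ∀ y ∈ Y, A i (fun _ => y) = 0) ∧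
      Order.succ (Cardinal.beth (↑n : Ordinal)) ≤ densityChar ↥Y) ∧
    (2 ≤ m → ∃ Y : Submodule ℂ X,
      (∀ i, ∀ y ∈ Y, A i (fun _ => y) = 0) ∧
      Order.succ (Cardinal.beth (↑(n + 1) : Ordinal)) ≤ densityChar ↥Y) := by
  have part2 : 2 ≤ m → ∃ Y : Submodule ℂ X,
      (∀ i, ∀ y ∈ Y, A i (fun _ => y) = 0) ∧
      Order.succ (Cardinal.beth (↑(n + 1) : Ordinal)) ≤ densityChar ↥Y := by
    intro h2
    obtain ⟨k, rfl⟩ : ∃ k, m = k + 1 := ⟨m - 1, by omega⟩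
    have hZ := AuxZ.hasZeros_beth (X := X) k (by omega) (n + 1)
      (by rwa [show n + 1 + k - 1 = n + (k + 1) - 1 by omega])
    exact AuxZ.zero_subspace _ _ (Cardinal.aleph0_le_beth _) (AuxZ.beth_nat_succ n) k (by omega) hZ
      ι hι (fun i => Fin (d i)) (by simpa using hd) A
  refine ⟨?_, part2⟩
  by_cases h2 : 2 ≤ m
  · obtain ⟨Y, hY, hdens⟩ := part2 h2
    refine ⟨Y, hY, le_trans (Order.succ_le_succ ?_) hdens⟩
    rw [← AuxZ.beth_nat_succ]
    exact (Cardinal.cantor _).le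
  obtain rfl : m = 1 := by omega
  have hZ := AuxZ.hasZeros_beth (X := X) 1 le_rfl n hX
  have hd1 : ∀ i, d i = 1 := fun i => le_antisymm (hd i).2 (hd i).1
  obtain ⟨Λ, _, x, f, hΛ, hf1, hfx, hf0, hGx⟩ := AuxZ.exists_seq _ (Cardinal.aleph0_le_beth _) 1
    le_rfl hZ (fun _ => Set.range fun i => fun x => A i (fun _ => x))
    (fun L _ => Cardinal.mk_range_le.trans hι) (by
      rintro L _ ⟨i, rfl⟩
      exact ⟨1, le_rfl, le_rfl, Fin (d i), inferInstance, A i, by simp [hd1], fun x => rfl⟩)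
  refine ⟨Submodule.span ℂ (Set.range x),
    fun i v hv => AuxZ.vanish_span (A i) x (fun j => ?_) v hv, ?_⟩
  · have hs : Subsingleton (Fin (d i)) := by rw [hd1]; infer_instance
    have e : (fun l => x (j l)) = fun _ => x (j ⟨0, by rw [hd1]; omega⟩) := by
      ext l; congr 2; exact Subsingleton.elim _ _
    rw [e]
    exact hGx _ _ ⟨i, rfl⟩
  · rw [← hΛ]
    refine AuxZ.le_densityChar_of_separated
      (fun t => ⟨x t, Submodule.subset_span ⟨t, rfl⟩⟩) ?_
    have key : ∀ s t, s < t → 1 ≤ ‖x s - x t‖ := by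
      intro s t hst
      have h1 : f s (x s - x t) = 1 := by rw [map_sub, hfx, hf0 _ _ hst, sub_zero]
      have h3 := (f s).le_opNorm (x s - x t)
      rw [h1, norm_one] at h3
      exact h3.trans (mul_le_of_le_one_left (norm_nonneg _) (hf1 _))
    intro s t hst
    rw [Subtype.dist_eq, dist_eq_norm]
    rcases lt_or_gt_of_ne hst with h | h
    · exact key s t h
    · rw [norm_sub_rev]; exact key t s h

end
end

section
/- Let m ≥ 2 be a natural number and let X be a complex Banach space such that the density of the dual space X* equipped with the weak-star topology is strictly greater than ℶ_{m−2}. Then every continuous homogeneous polynomial P : X → ℂ of degree m has a nonseparable zero subspace, i.e., a nonseparable linear subspace Y ⊆ X with P(y) = 0 for all y ∈ Y. -/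
noncomputable section

universe u

open Classical in
theorem zs_nonsep {X : Type u} [NormedAddCommGroup X] [NormedSpace ℂ X]
    (κ : Cardinal.{u}) (hκ : Cardinal.aleph0 ≤ κ) (h : κ < densityChar (WeakDual ℂ X))
    (G : Set (WeakDual ℂ X)) (hG : Cardinal.mk G ≤ κ) :
    ∃ x : X, x ≠ 0 ∧ ∀ f ∈ G, f x = 0 := by
  by_contra hcon
  push Not at hcon
  let D : Set (WeakDual ℂ X) :=
    Set.range (fun q : ℕ × G => (TopologicalSpace.denseSeq ℂ q.1) • (q.2 : WeakDual ℂ X))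
  have hD : Cardinal.mk D ≤ κ := by
    refine Cardinal.mk_range_le.trans ?_
    rw [Cardinal.mk_prod]
    simpa using Cardinal.mul_le_of_le hκ hκ hG
  let S := AddSubmonoid.closure D
  have hS : Cardinal.mk S ≤ κ := by
    have : (S : Set (WeakDual ℂ X)) =
        Set.range (FreeAddMonoid.lift ((↑) : D → WeakDual ℂ X)) := by
      have := AddSubmonoid.closure_eq_mrange D
      rw [← AddMonoidHom.coe_mrange, ← this]
    change Cardinal.mk (S : Set (WeakDual ℂ X)) ≤ κ
    rw [this]
    refine Cardinal.mk_range_le.trans ?_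
    change Cardinal.mk (List D) ≤ κ
    exact (Cardinal.mk_list_le_max _).trans (max_le hκ hD)
  have hspan : ∀ g ∈ Submodule.span ℂ G, g ∈ S.topologicalClosure := by
    intro g hg
    induction hg using Submodule.closure_induction with
    | zero => exact zero_mem _
    | add x y _ _ hx hy => exact add_mem hx hy
    | smul_mem r x hx =>
      have hc : Continuous (fun t : ℂ => t • x) := by fun_prop
      have := hc.range_subset_closure_image_dense (TopologicalSpace.denseRange_denseSeq ℂ)
      have h2 := this (Set.mem_range_self r)
      refine closure_mono ?_ h2
      rintro _ ⟨_, ⟨n, rfl⟩, rfl⟩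
      exact AddSubmonoid.subset_closure ⟨(n, ⟨x, hx⟩), rfl⟩
  have hdense : Dense (S : Set (WeakDual ℂ X)) := by
    intro φ
    have key : ∀ F : Finset X, ∃ g ∈ Submodule.span ℂ G, ∀ x ∈ F, g x = φ x := by
      intro F
      let ev : WeakDual ℂ X →ₗ[ℂ] (F → ℂ) :=
        { toFun := fun g x => g x
          map_add' := fun a b => rfl
          map_smul' := fun a b => rfl }
      by_cases hm : ev φ ∈ (Submodule.span ℂ G).map ev
      · obtain ⟨g, hg, hge⟩ := hm
        exact ⟨g, hg, fun x hx => congrFun hge ⟨x, hx⟩⟩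
      · exfalso
        obtain ⟨l, hl, hle⟩ := Submodule.exists_le_ker_of_notMem hm
        have hlin : ∀ g : WeakDual ℂ X,
            l (ev g) = g (∑ i : F, l (Pi.single i 1) • (i : X)) := by
          intro g
          rw [map_sum, LinearMap.pi_apply_eq_sum_univ l (ev g)]
          refine Finset.sum_congr rfl fun i _ => ?_
          rw [map_smul]
          simp only [smul_eq_mul]
          rw [mul_comm]
          congr 3
          ext j
          simp [Pi.single_apply, eq_comm]
        apply hl
        rw [hlin]
        by_cases hz : (∑ i : F, l (Pi.single i 1) • (i : X)) = 0
        · rw [hz]; exact map_zero φ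
        · obtain ⟨f, hf, hfz⟩ := hcon _ hz
          exfalso
          apply hfz
          rw [← hlin]
          exact hle ⟨f, Submodule.subset_span hf, rfl⟩
    choose g hg hgx using key
    have ht : Filter.Tendsto g Filter.atTop (nhds φ) := by
      rw [tendsto_iff_forall_eval_tendsto_topDualPairing]
      intro x
      refine tendsto_const_nhds.congr' ?_
      filter_upwards [Filter.eventually_ge_atTop {x}] with F hF
      exact (hgx F x (hF (by simp))).symm
    have := mem_closure_of_tendsto ht (Filter.Eventually.of_forall fun F => hspan _ (hg F))
    exact (S.isClosed_topologicalClosure.closure_eq ▸ this : φ ∈ _)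
  have : densityChar (WeakDual ℂ X) ≤ κ :=
    (csInf_le' ⟨S, hdense, rfl⟩ : densityChar (WeakDual ℂ X) ≤ Cardinal.mk S).trans hS
  exact absurd h this.not_gt

/-- A bundled continuous multilinear form. -/
structure ZForm (X : Type u) [NormedAddCommGroup X] [NormedSpace ℂ X] where
  n : ℕ
  A : ContinuousMultilinearMap ℂ (fun _ : Fin n => X) ℂ

/-- Evaluation on the diagonal. -/
def ZForm.ev {X : Type u} [NormedAddCommGroup X] [NormedSpace ℂ X] (a : ZForm X) (x : X) : ℂ :=
  a.A fun _ => x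

/-- Linear forms. -/
def ZForm.lin {X : Type u} [NormedAddCommGroup X] [NormedSpace ℂ X] (f : X →L[ℂ] ℂ) : ZForm X :=
  ⟨1, ContinuousMultilinearMap.ofSubsingleton ℂ X ℂ (0 : Fin 1) f⟩

theorem ZForm.lin_ev {X : Type u} [NormedAddCommGroup X] [NormedSpace ℂ X] (f : X →L[ℂ] ℂ) (x : X) :
    (ZForm.lin f).ev x = f x := rfl

open Classical in
theorem zs_restr {X : Type u} [NormedAddCommGroup X] [NormedSpace ℂ X] (a : ZForm X)
    (v : Fin a.n → Option X) (h1 : ∃ i, v i = none) (h2 : ∃ i, v i ≠ none) :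
    ∃ b : ZForm X, 1 ≤ b.n ∧ b.n < a.n ∧ ∀ y, b.ev y = a.A (fun i => (v i).getD y) := by
  let J := {i // v i = none}
  let w : (J → X) → (Fin a.n → X) := fun w i => if h : v i = none then w ⟨i, h⟩ else (v i).getD 0
  have hw : ∀ [DecidableEq J] (z : J → X) (j : J) (c : X),
      w (Function.update z j c) = Function.update (w z) j.1 c := by
    intro _ z j c
    ext i
    by_cases hi : v i = none
    · by_cases hij : i = j.1
      · subst hij
        simp [w, hi]
      · have : (⟨i, hi⟩ : J) ≠ j := fun h => hij (by rw [← h])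
        simp [w, hi, hij, this]
    · have hij : i ≠ j.1 := fun h => hi (h ▸ j.2)
      simp [w, hi, hij]
  have hwc : Continuous w := by
    refine continuous_pi fun i => ?_
    by_cases hi : v i = none
    · simp only [w, hi, dif_pos]
      fun_prop
    · simp only [w, hi, dif_neg, not_false_eq_true]
      fun_prop
  let B : ContinuousMultilinearMap ℂ (fun _ : J => X) ℂ :=
    { toFun := fun z => a.A (w z)
      map_update_add' := by
        intro inst z j x y
        change a.A (w _) = a.A (w _) + a.A (w _)
        rw [hw, hw, hw]
        exact a.A.map_update_add (w z) j.1 x y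
      map_update_smul' := by
        intro inst z j c x
        change a.A (w _) = c • a.A (w _)
        rw [hw, hw]
        exact a.A.map_update_smul (w z) j.1 c x
      cont := a.A.cont.comp hwc }
  refine ⟨⟨Fintype.card J, B.domDomCongr (Fintype.equivFin J)⟩, ?_, ?_, ?_⟩
  · obtain ⟨i, hi⟩ := h1
    have : Nonempty J := ⟨⟨i, hi⟩⟩
    exact (Fintype.card_pos : 0 < Fintype.card J)
  · obtain ⟨i, hi⟩ := h2
    have := Fintype.card_subtype_lt (p := fun i => v i = none) hi
    simpa using this
  · intro y
    change a.A (w fun _ => y) = _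
    congr 1
    ext i
    by_cases hi : v i = none
    · simp [w, hi]
    · obtain ⟨b, hb⟩ := Option.ne_none_iff_exists'.1 hi
      simp [w, hb]

open Classical in
theorem zs_one {X : Type u} [NormedAddCommGroup X] [NormedSpace ℂ X]
    (d : ℕ) (hd : 1 ≤ d) (μ : Cardinal.{u}) (hμ : Cardinal.aleph0 ≤ μ) (Q : X → Prop)
    (H : ∀ S : Set (ZForm X), Cardinal.mk S ≤ μ → (∀ a ∈ S, 1 ≤ a.n ∧ a.n ≤ d) →
      ∃ x : X, x ≠ 0 ∧ Q x ∧ ∀ a ∈ S, a.ev x = 0)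
    (S : Set (ZForm X)) (hS : Cardinal.mk S ≤ μ) (hSn : ∀ a ∈ S, a.n ≤ d + 1)
    (φ : X → X →L[ℂ] ℂ) (B : Set X) (hB : Cardinal.mk B ≤ μ) :
    ∃ y : X, y ≠ 0 ∧ Q y ∧ (∀ b ∈ B, φ b y = 0) ∧
      ∀ a ∈ S, ∀ v : Fin a.n → Option X, (∀ i b, v i = some b → b ∈ B) → (∃ i, v i = none) →
        (∃ i, v i ≠ none) → a.A (fun i => (v i).getD y) = 0 := by
  choose R hR1 hR2 hR3 using @zs_restr X _ _
  let vl : (a : ZForm X) → List (Option B) → (Fin a.n → Option X) :=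
    fun a l i => (l.getD i none).map Subtype.val
  let t : S × List (Option B) → ZForm X := fun q =>
    if h : (∃ i, vl q.1 q.2 i = none) ∧ (∃ i, vl q.1 q.2 i ≠ none) then
      R q.1 (vl q.1 q.2) h.1 h.2 else ZForm.lin 0
  let T : Set (ZForm X) := Set.range t ∪ Set.range (fun b : B => ZForm.lin (φ b))
  have hT : Cardinal.mk T ≤ μ := by
    refine (Cardinal.mk_union_le _ _).trans (Cardinal.add_le_of_le hμ ?_ ?_)
    · refine Cardinal.mk_range_le.trans ?_
      rw [Cardinal.mk_prod, Cardinal.lift_id, Cardinal.lift_id]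
      refine Cardinal.mul_le_of_le hμ hS ?_
      refine (Cardinal.mk_list_le_max _).trans (max_le hμ ?_)
      rw [Cardinal.mk_option]
      exact Cardinal.add_le_of_le hμ hB (Cardinal.one_le_aleph0.trans hμ)
    · exact Cardinal.mk_range_le.trans hB
  have hTn : ∀ a ∈ T, 1 ≤ a.n ∧ a.n ≤ d := by
    rintro a (⟨q, rfl⟩ | ⟨b, rfl⟩)
    · by_cases h : (∃ i, vl q.1 q.2 i = none) ∧ (∃ i, vl q.1 q.2 i ≠ none)
      · simp only [t, dif_pos h]
        have h1 := hSn _ q.1.2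
        have h2 := hR2 q.1 (vl q.1 q.2) h.1 h.2
        exact ⟨hR1 _ _ _ _, by omega⟩
      · simp only [t, dif_neg h]
        exact ⟨le_rfl, hd⟩
    · exact ⟨le_rfl, hd⟩
  obtain ⟨y, hy0, hyQ, hy⟩ := H T hT hTn
  refine ⟨y, hy0, hyQ, fun b hb => ?_, ?_⟩
  · exact hy _ (Or.inr ⟨⟨b, hb⟩, rfl⟩)
  · intro a ha v hvB h1 h2
    let l : List (Option B) := List.ofFn fun i => (v i).pmap (fun b hb => (⟨b, hb⟩ : B))
      (fun b hb => hvB i b hb)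
    have hl : vl a l = v := by
      ext1 i
      cases hv : v i with
      | none => simp [vl, l, hv]
      | some b => simp [vl, l, hv]
    have h3 : (∃ i, vl a l i = none) ∧ (∃ i, vl a l i ≠ none) := by
      rw [hl]; exact ⟨h1, h2⟩
    have := hy _ (Or.inl ⟨(⟨a, ha⟩, l), rfl⟩)
    simp only [t, dif_pos h3, hR3] at this
    rw [hl] at this
    exact this

open Classical in
theorem zs_step {X : Type u} [NormedAddCommGroup X] [NormedSpace ℂ X]
    (d : ℕ) (hd : 1 ≤ d) (μ : Cardinal.{u}) (hμ : Cardinal.aleph0 ≤ μ) (Q : X → Prop)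
    (H : ∀ S : Set (ZForm X), Cardinal.mk S ≤ μ → (∀ a ∈ S, 1 ≤ a.n ∧ a.n ≤ d) →
      ∃ x : X, x ≠ 0 ∧ Q x ∧ ∀ a ∈ S, a.ev x = 0)
    (S : Set (ZForm X)) (hS : Cardinal.mk S ≤ μ) (hSn : ∀ a ∈ S, 1 ≤ a.n ∧ a.n ≤ d + 1)
    (I : Type u) [LinearOrder I] [WellFoundedLT I] (hI : ∀ i : I, Cardinal.mk (Set.Iio i) ≤ μ) :
    ∃ (x : I → X) (f : I → X →L[ℂ] ℂ), (∀ i, f i (x i) ≠ 0) ∧ (∀ i j, i < j → f i (x j) = 0) ∧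
      (∀ i, Q (x i)) ∧ ∀ a ∈ S, ∀ (F : Finset I) (c : I → ℂ),
        a.ev (∑ i ∈ F, c i • x i) = ∑ i ∈ F, c i ^ a.n * a.ev (x i) := by
  have hφ : ∀ x : X, ∃ f : X →L[ℂ] ℂ, x ≠ 0 → f x ≠ 0 := by
    intro x
    obtain ⟨g, _, hg⟩ := exists_dual_vector'' ℂ x
    refine ⟨g, fun hx => ?_⟩
    rw [hg]
    simpa using hx
  choose φ hφ using hφ
  have h1 := zs_one d hd μ hμ Q H S hS (fun a ha => (hSn a ha).2) φ
  let st : Set X → X := fun B => if hB : Cardinal.mk B ≤ μ then (h1 B hB).choose else 0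
  let x : I → X := WellFounded.fix (wellFounded_lt (α := I))
    (fun i ih => st (Set.range fun j : Set.Iio i => ih j.1 j.2))
  have hx : ∀ i, x i = st (Set.range fun j : Set.Iio i => x j) := fun i =>
    WellFounded.fix_eq _ _ i
  have hcard : ∀ i, Cardinal.mk (Set.range fun j : Set.Iio i => x j) ≤ μ := fun i =>
    Cardinal.mk_range_le.trans (hI i)
  have hgood := fun i => (h1 _ (hcard i)).choose_spec
  have hxx : ∀ i, (h1 _ (hcard i)).choose = x i := by
    intro i
    rw [hx i]
    simp only [st, dif_pos (hcard i)]
  simp only [hxx] at hgood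
  refine ⟨x, fun i => φ (x i), fun i => hφ _ (hgood i).1, fun i j hij => ?_,
    fun i => (hgood i).2.1, ?_⟩
  · exact (hgood j).2.2.1 _ ⟨⟨i, hij⟩, rfl⟩
  · intro a ha F c
    have hmix : ∀ r : Fin a.n → I, (¬ ∃ i, ∀ k, r k = i) → a.A (fun k => x (r k)) = 0 := by
      intro r hr
      have : Nonempty (Fin a.n) := ⟨⟨0, (hSn a ha).1⟩⟩
      obtain ⟨k0, hk0⟩ := Finite.exists_max r
      have := (hgood (r k0)).2.2.2 a ha
        (fun k => if r k = r k0 then none else some (x (r k))) ?_ ⟨k0, by simp⟩ ?_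
      · rw [← this]
        congr 1
        ext k
        by_cases hk : r k = r k0
        · simp [hk]
        · simp [hk]
      · intro k b hb
        by_cases hk : r k = r k0
        · simp [hk] at hb
        · simp only [hk, if_false, Option.some.injEq] at hb
          exact ⟨⟨r k, lt_of_le_of_ne (hk0 k) hk⟩, hb⟩
      · by_contra hcon
        push Not at hcon
        refine hr ⟨r k0, fun k => ?_⟩
        by_contra hk
        have := hcon k
        simp [hk] at this
    have hk0 : Fin a.n := ⟨0, (hSn a ha).1⟩
    unfold ZForm.ev
    rw [ContinuousMultilinearMap.map_sum_finset]
    simp only [ContinuousMultilinearMap.map_smul_univ]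
    symm
    refine Finset.sum_of_injOn (fun i _ => i) ?_ ?_ ?_ ?_
    · intro i _ j _ hij
      exact congrFun hij hk0
    · intro i hi
      simpa using fun _ => hi
    · intro r hr hr2
      have : a.A (fun k => x (r k)) = 0 := by
        apply hmix
        rintro ⟨i, hi⟩
        apply hr2
        refine ⟨i, ?_, ?_⟩
        · have := Fintype.mem_piFinset.1 hr hk0
          rw [hi] at this
          exact this
        · ext k; exact (hi k).symm
      rw [this, smul_zero]
    · intro i hi
      simp

theorem zs_linform {X : Type u} [NormedAddCommGroup X] [NormedSpace ℂ X] (a : ZForm X)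
    (h : a.n = 1) : ∃ g : WeakDual ℂ X, ∀ x, g x = a.ev x := by
  obtain ⟨n, A⟩ := a
  dsimp only at h
  subst h
  exact ⟨StrongDual.toWeakDual ((ContinuousMultilinearMap.ofSubsingleton ℂ X ℂ (0 : Fin 1)).symm A),
    fun x => rfl⟩

theorem zs_main {X : Type u} [NormedAddCommGroup X] [NormedSpace ℂ X] (k : ℕ) :
    ∀ l : Cardinal.{u}, Cardinal.aleph0 ≤ l →
      (fun c : Cardinal.{u} => 2 ^ c)^[k] l < densityChar (WeakDual ℂ X) →
      ∀ S : Set (ZForm X), Cardinal.mk S ≤ l → (∀ a ∈ S, 1 ≤ a.n ∧ a.n ≤ k + 1) →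
        ∃ x : X, x ≠ 0 ∧ ∀ a ∈ S, a.ev x = 0 := by
  induction k with
  | zero =>
    intro l hl hX S hS hSn
    have : ∀ a : S, ∃ g : WeakDual ℂ X, ∀ x, g x = a.1.ev x := fun a =>
      zs_linform a.1 (by have := hSn a.1 a.2; omega)
    choose g hg using this
    obtain ⟨x, hx0, hx⟩ := zs_nonsep l hl hX (Set.range g) (Cardinal.mk_range_le.trans hS)
    exact ⟨x, hx0, fun a ha => by rw [← hg ⟨a, ha⟩]; exact hx _ ⟨_, rfl⟩⟩
  | succ k ih =>
    intro l hl hX S hS hSn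
    rw [Function.iterate_succ_apply] at hX
    have hl2 : l < 2 ^ l := Cardinal.cantor l
    have hl0 : Cardinal.aleph0 ≤ 2 ^ l := hl.trans hl2.le
    have ih' := ih (2 ^ l) hl0 hX
    let Q : X → Prop := fun x => ∀ a ∈ S, a.n ≤ k + 1 → a.ev x = 0
    obtain ⟨x, f, hf1, hf2, hQ, hev⟩ := zs_step (k + 1) (by omega) (2 ^ l) hl0 Q (by
      intro T hT hTn
      suffices h : ∃ x : X, x ≠ 0 ∧ ∀ a ∈ T ∪ {a ∈ S | a.n ≤ k + 1}, a.ev x = 0 by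
        obtain ⟨x, hx0, hx⟩ := h
        exact ⟨x, hx0, fun a ha hak => hx a (Or.inr ⟨ha, hak⟩), fun a ha => hx a (Or.inl ha)⟩
      apply ih'
      · refine (Cardinal.mk_union_le _ _).trans (Cardinal.add_le_of_le hl0 hT ?_)
        exact ((Cardinal.mk_le_mk_of_subset (Set.sep_subset _ _)).trans hS).trans hl2.le
      · rintro a (ha | ha)
        · exact hTn a ha
        · exact ⟨(hSn a ha.1).1, ha.2⟩) S (hS.trans hl2.le) hSn
      (Order.succ (2 ^ l : Cardinal.{u})).ord.ToType (fun i => by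
        exact Order.lt_succ_iff.1 (Cardinal.mk_Iio_toType_ord_lt i))
    have hninj : ¬ Function.Injective (fun i => fun a : S => a.1.ev (x i)) := by
      intro hinj
      have h1 := Cardinal.mk_le_of_injective hinj
      rw [Cardinal.mk_ord_toType, Cardinal.mk_arrow] at h1
      have h2 : Cardinal.lift.{u} (Cardinal.mk ℂ) ^ Cardinal.lift.{0} (Cardinal.mk S) ≤ 2 ^ l := by
        rw [Cardinal.mk_complex, Cardinal.lift_continuum, Cardinal.lift_uzero]
        refine (Cardinal.power_le_power_left Cardinal.continuum_ne_zero hS).trans ?_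
        rw [← Cardinal.two_power_aleph0, ← Cardinal.power_mul, Cardinal.aleph0_mul_eq hl]
      exact absurd (h1.trans h2) (Order.lt_succ _).not_ge
    have : ∃ i j, i < j ∧ ∀ a ∈ S, a.ev (x i) = a.ev (x j) := by
      simp only [Function.Injective, not_forall] at hninj
      obtain ⟨i, j, hij, hne⟩ := hninj
      rcases lt_or_gt_of_ne hne with h | h
      · exact ⟨i, j, h, fun a ha => congrFun hij ⟨a, ha⟩⟩
      · exact ⟨j, i, h, fun a ha => (congrFun hij ⟨a, ha⟩).symm⟩
    obtain ⟨i, j, hij, heq⟩ := this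
    obtain ⟨z, hz⟩ := IsAlgClosed.exists_pow_nat_eq (-1 : ℂ) (n := k + 1 + 1) (by omega)
    have hs : ∀ c : _ → ℂ, ∑ t ∈ {i, j}, c t • x t = c i • x i + c j • x j := fun c =>
      Finset.sum_pair hij.ne
    let c := fun t => if t = i then (1 : ℂ) else z
    have hci : c i = 1 := by simp [c]
    have hcj : c j = z := by simp [c, hij.ne']
    refine ⟨c i • x i + c j • x j, ?_, ?_⟩
    · intro h0
      have := congrArg (f i) h0
      rw [map_add, map_smul, map_smul, hf2 i j hij, hci] at this
      simp at this
      exact hf1 i this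
    · intro a ha
      rw [← hs, hev a ha, Finset.sum_pair hij.ne, hci, hcj]
      by_cases hak : a.n ≤ k + 1
      · rw [hQ i a ha hak, hQ j a ha hak]; simp
      · have : a.n = k + 1 + 1 := by have := hSn a ha; omega
        rw [this, hz, heq a ha]; ring

theorem zs_iter (k : ℕ) : (fun c : Cardinal.{u} => 2 ^ c)^[k] Cardinal.aleph0 =
    Cardinal.beth (k : Ordinal.{u}) := by
  induction k with
  | zero => simp
  | succ k ih =>
    rw [Function.iterate_succ_apply', ih, Nat.cast_succ, Cardinal.beth_add_one]

theorem zs_aleph1 (i : (Cardinal.aleph 1 : Cardinal.{u}).ord.ToType) :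
    Cardinal.mk (Set.Iio i) ≤ Cardinal.aleph0 := by
  have := Cardinal.mk_Iio_toType_ord_lt i
  rw [← Order.lt_succ_iff, Cardinal.succ_aleph0]
  exact this

theorem zs_extra {X : Type u} [NormedAddCommGroup X] [NormedSpace ℂ X] (k : ℕ)
    (hX : Cardinal.beth (k : Ordinal.{u}) < densityChar (WeakDual ℂ X))
    (p : ZForm X) (hp : p.n = k + 2)
    (S : Set (ZForm X)) (hS : Cardinal.mk S ≤ Cardinal.aleph0)
    (hSn : ∀ a ∈ S, 1 ≤ a.n ∧ a.n ≤ k + 1) :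
    ∃ x : X, x ≠ 0 ∧ p.ev x = 0 ∧ ∀ a ∈ S, a.ev x = 0 := by
  have hm := zs_main (X := X) k Cardinal.aleph0 le_rfl (by rw [zs_iter]; exact hX)
  obtain ⟨x, f, hf1, hf2, hQ, hev⟩ := zs_step (k + 1) (by omega) Cardinal.aleph0 le_rfl
    (fun x : X => ∀ a ∈ S, a.ev x = 0) (by
      intro T hT hTn
      suffices h : ∃ x : X, x ≠ 0 ∧ ∀ a ∈ T ∪ S, a.ev x = 0 by
        obtain ⟨x, hx0, hx⟩ := h
        exact ⟨x, hx0, fun a ha => hx a (Or.inr ha), fun a ha => hx a (Or.inl ha)⟩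
      apply hm
      · exact (Cardinal.mk_union_le _ _).trans (Cardinal.add_le_of_le le_rfl hT hS)
      · rintro a (ha | ha)
        · exact hTn a ha
        · exact hSn a ha) (S ∪ {p})
    ((Cardinal.mk_union_le _ _).trans (Cardinal.add_le_of_le le_rfl hS (by simp)))
    (by
      rintro a (ha | ha)
      · have := hSn a ha; omega
      · rw [Set.mem_singleton_iff.1 ha]; omega)
    (Cardinal.aleph 1 : Cardinal.{u}).ord.ToType zs_aleph1
  have hnt : Nontrivial (Cardinal.aleph 1 : Cardinal.{u}).ord.ToType := by
    rw [← Cardinal.one_lt_iff_nontrivial, Cardinal.mk_ord_toType]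
    exact Cardinal.one_lt_aleph0.trans Cardinal.aleph0_lt_aleph_one
  obtain ⟨i, j, hij⟩ := exists_pair_lt (Cardinal.aleph 1 : Cardinal.{u}).ord.ToType
  have hx0 : ∀ i, x i ≠ 0 := fun i h => hf1 i (by rw [h]; simp)
  by_cases hpi : p.ev (x j) = 0
  · exact ⟨x j, hx0 j, hpi, hQ j⟩
  obtain ⟨z, hz⟩ := IsAlgClosed.exists_pow_nat_eq (-(p.ev (x i) / p.ev (x j))) (n := k + 2)
    (by omega)
  have hs : ∀ c : _ → ℂ, ∑ t ∈ {i, j}, c t • x t = c i • x i + c j • x j := fun c =>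
    Finset.sum_pair hij.ne
  let c := fun t => if t = i then (1 : ℂ) else z
  have hci : c i = 1 := by simp [c]
  have hcj : c j = z := by simp [c, hij.ne']
  refine ⟨c i • x i + c j • x j, ?_, ?_, ?_⟩
  · intro h0
    have := congrArg (f i) h0
    rw [map_add, map_smul, map_smul, hf2 i j hij, hci] at this
    simp at this
    exact hf1 i this
  · rw [← hs, hev p (Or.inr rfl), Finset.sum_pair hij.ne, hci, hcj, hp, hz]
    field_simp
    ring
  · intro a ha
    rw [← hs, hev a (Or.inl ha), Finset.sum_pair hij.ne, hQ i a ha, hQ j a ha]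
    simp

theorem zs_nonseparable {X : Type u} [NormedAddCommGroup X] [NormedSpace ℂ X]
    {I : Type u} [LinearOrder I] (hI : ¬ Countable I) (x : I → X) (f : I → X →L[ℂ] ℂ)
    (h1 : ∀ i, f i (x i) ≠ 0) (h2 : ∀ i j, i < j → f i (x j) = 0)
    (Y : Set X) (hY : ∀ i, x i ∈ Y) : ¬ TopologicalSpace.IsSeparable Y := by
  intro hs
  have := hs.separableSpace
  have : SecondCountableTopology Y := UniformSpace.secondCountable_of_separable Y
  let B := TopologicalSpace.countableBasis Y
  have hB := TopologicalSpace.isBasis_countableBasis Y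
  have hV : ∀ i, ∃ V : B, (⟨x i, hY i⟩ : Y) ∈ V.1 ∧ V.1 ⊆ {y : Y | f i y ≠ 0} := by
    intro i
    have ho : IsOpen {y : Y | f i y ≠ 0} :=
      isOpen_ne_fun ((f i).continuous.comp continuous_subtype_val) continuous_const
    obtain ⟨V, hVB, hV1, hV2⟩ := hB.exists_subset_of_mem_open (a := ⟨x i, hY i⟩) (h1 i) ho
    exact ⟨⟨V, hVB⟩, hV1, hV2⟩
  choose V hV1 hV2 using hV
  have hlt : ∀ i j, i < j → V i ≠ V j := by
    intro i j hij he
    have := hV1 j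
    rw [← he] at this
    exact hV2 i this (h2 i j hij)
  have hinj : Function.Injective V := by
    intro i j he
    rcases lt_trichotomy i j with h | h | h
    · exact absurd he (hlt _ _ h)
    · exact h
    · exact absurd he.symm (hlt _ _ h)
  have : Countable B := (TopologicalSpace.countable_countableBasis Y).to_subtype
  exact hI hinj.countable

/-- Let `m ≥ 2` and let `X` be a complex Banach space whose dual `X*`, with the weak-star
topology, has density character `> ℶ_{m-2}`. Then every continuous homogeneous polynomial
`P : X → ℂ` of degree `m` (i.e., `P x = A (x, …, x)` for a continuous symmetric `m`-linear
form `A`) has a nonseparable zero subspace. -/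
theorem exists_nonseparable_zero_subspace_of_large_weak_star_density
    {X : Type u} [NormedAddCommGroup X] [NormedSpace ℂ X] [CompleteSpace X]
    (m : ℕ) (hm : 2 ≤ m)
    (hX : Cardinal.beth (↑(m - 2) : Ordinal) < densityChar (WeakDual ℂ X))
    (A : ContinuousMultilinearMap ℂ (fun _ : Fin m => X) ℂ)
    (hsymm : ∀ (x : Fin m → X) (σ : Equiv.Perm (Fin m)), A (x ∘ σ) = A x)
    (P : X → ℂ) (hP : ∀ x, P x = A fun _ => x) :
    ∃ Y : Submodule ℂ X,
      ¬ TopologicalSpace.IsSeparable (Y : Set X) ∧ ∀ y ∈ Y, P y = 0 := by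
  obtain ⟨k, rfl⟩ : ∃ k, m = k + 2 := ⟨m - 2, by omega⟩
  rw [Nat.add_sub_cancel] at hX
  let p : ZForm X := ⟨k + 2, A⟩
  obtain ⟨x, f, hf1, hf2, hQ, hev⟩ := zs_step (k + 1) (by omega) Cardinal.aleph0 le_rfl
    (fun x : X => p.ev x = 0) (fun T hT hTn => zs_extra k hX p rfl T hT hTn) {p}
    (by simp) (by rintro a rfl; exact ⟨by simp [p], by simp [p]⟩)
    (Cardinal.aleph 1 : Cardinal.{u}).ord.ToType zs_aleph1
  refine ⟨Submodule.span ℂ (Set.range x), ?_, ?_⟩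
  · refine zs_nonseparable ?_ x f hf1 hf2 _ (fun i => Submodule.subset_span ⟨i, rfl⟩)
    rw [← Cardinal.mk_le_aleph0_iff, Cardinal.mk_ord_toType, not_le]
    exact Cardinal.aleph0_lt_aleph_one
  · intro y hy
    obtain ⟨c, rfl⟩ := (Finsupp.mem_span_range_iff_exists_finsupp).1 hy
    rw [hP]
    change p.ev (∑ i ∈ c.support, c i • x i) = 0
    rw [hev p rfl]
    refine Finset.sum_eq_zero fun i _ => ?_
    rw [hQ i, mul_zero]

end
end

section
/- Let X be an infinite-dimensional complex Banach space and let P : X → ℂ be a continuous polynomial with P(0) = 0 (i.e., P is a finite sum of continuous homogeneous polynomials of degrees ≥ 1). Then there is an infinite-dimensional linear subspace Y ⊆ X such that P(y) = 0 for every y ∈ Y. -/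
noncomputable section

lemma zs_family {X : Type*} [AddCommGroup X] [Module ℂ X] {κ : Type*} [Finite κ]
    (Q : κ → Submodule ℂ X → Prop) (hQ : ∀ k Y Z, Z ≤ Y → Q k Y → Q k Z)
    (h : ∀ k (W : Submodule ℂ X), ¬ FiniteDimensional ℂ W →
      ∃ Y ≤ W, ¬ FiniteDimensional ℂ Y ∧ Q k Y)
    (W : Submodule ℂ X) (hW : ¬ FiniteDimensional ℂ W) :
    ∃ Y ≤ W, ¬ FiniteDimensional ℂ Y ∧ ∀ k, Q k Y := by
  classical
  cases nonempty_fintype κ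
  have key : ∀ s : Finset κ, ∃ Y ≤ W, ¬ FiniteDimensional ℂ Y ∧ ∀ k ∈ s, Q k Y := by
    intro s
    induction s using Finset.induction_on with
    | empty => exact ⟨W, le_rfl, hW, by simp⟩
    | insert a s _ ih =>
      obtain ⟨Y, hY, hYi, hYQ⟩ := ih
      obtain ⟨Z, hZ, hZi, hZQ⟩ := h a Y hYi
      refine ⟨Z, hZ.trans hY, hZi, fun k hk => ?_⟩
      rcases Finset.mem_insert.1 hk with rfl | hk
      · exact hZQ
      · exact hQ _ _ _ hZ (hYQ k hk)
  obtain ⟨Y, h1, h2, h3⟩ := key Finset.univ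
  exact ⟨Y, h1, h2, fun k => h3 k (Finset.mem_univ k)⟩

lemma zs_outside {X : Type*} [AddCommGroup X] [Module ℂ X] (Y : Submodule ℂ X)
    (hY : ¬ FiniteDimensional ℂ Y) (s : Finset X) :
    ∃ y ∈ Y, y ∉ Submodule.span ℂ (s : Set X) := by
  by_contra! hc
  have : FiniteDimensional ℂ (Submodule.span ℂ (s : Set X)) :=
    FiniteDimensional.span_finset ℂ s
  exact hY (Submodule.finiteDimensional_of_le (S₂ := Submodule.span ℂ (s : Set X)) hc)

lemma zs_span {X : Type*} [AddCommGroup X] [Module ℂ X] {ι : Type} [Fintype ι]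
    (A : MultilinearMap ℂ (fun _ : ι => X) ℂ) (S : Set X)
    (h : ∀ v : ι → X, (∀ i, v i ∈ S) → A v = 0) (v : ι → X)
    (hv : ∀ i, v i ∈ Submodule.span ℂ S) : A v = 0 := by
  classical
  have key : ∀ T : Finset ι, ∀ v : ι → X, (∀ i ∈ T, v i ∈ Submodule.span ℂ S) →
      (∀ i, i ∉ T → v i ∈ S) → A v = 0 := by
    intro T
    induction T using Finset.induction_on with
    | empty => intro v _ h2; exact h v (fun i => h2 i (by simp))
    | insert a T ha ih =>
      intro v h1 h2
      have hgen : ∀ w ∈ Submodule.span ℂ S, A (Function.update v a w) = 0 := by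
        intro w hw
        induction hw using Submodule.span_induction with
        | mem w hw =>
          apply ih
          · intro i hi
            have : i ≠ a := fun e => ha (e ▸ hi)
            rw [Function.update_of_ne this]
            exact h1 i (Finset.mem_insert_of_mem hi)
          · intro i hi
            by_cases e : i = a
            · subst e; simpa using hw
            · rw [Function.update_of_ne e]
              exact h2 i (by simp [e, hi])
        | zero => exact A.map_update_zero v a
        | add x y _ _ hx hy => rw [A.map_update_add, hx, hy, add_zero]
        | smul c x _ hx => rw [A.map_update_smul, hx, smul_zero]
      have := hgen (v a) (h1 a (Finset.mem_insert_self _ _))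
      rwa [Function.update_eq_self] at this
  exact key Finset.univ v (fun i _ => hv i) (fun i hi => absurd (Finset.mem_univ i) hi)

lemma zs_seq {X : Type*} [AddCommGroup X] [Module ℂ X] (R : Finset X → X → Prop)
    (hR : ∀ s : Finset X, ∃ y, y ∉ Submodule.span ℂ (s : Set X) ∧ R s y) :
    ∃ (x : ℕ → X) (S : ℕ → Finset X), (∀ n, R (S n) (x n)) ∧ (∀ j n, j < n → x j ∈ S n) ∧
      ¬ FiniteDimensional ℂ (Submodule.span ℂ (Set.range x)) := by
  classical
  choose g hg1 hg2 using hR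
  let S : ℕ → Finset X := fun n => Nat.rec ∅ (fun _ s => insert (g s) s) n
  have hS : ∀ n, S (n + 1) = insert (g (S n)) (S n) := fun n => rfl
  have hmem : ∀ j n, j < n → g (S j) ∈ S n := by
    intro j n hjn
    induction n with
    | zero => omega
    | succ n ih =>
      rw [hS]
      rcases Nat.lt_succ_iff_lt_or_eq.1 hjn with h | rfl
      · exact Finset.mem_insert_of_mem (ih h)
      · exact Finset.mem_insert_self _ _
  refine ⟨fun n => g (S n), S, fun n => hg2 _, hmem, ?_⟩
  intro hfin
  have hfg : (Submodule.span ℂ (Set.range fun n => g (S n))).FG :=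
    (Submodule.fg_iff_finiteDimensional _).2 hfin
  rw [Submodule.fg_span_iff_fg_span_finset_subset] at hfg
  obtain ⟨t, ht, hte⟩ := hfg
  have : ∃ n, ∀ y ∈ t, y ∈ S n := by
    choose! f hf using fun y (hy : y ∈ t) => ht hy
    refine ⟨t.sup f + 1, fun y hy => ?_⟩
    rw [← hf y hy]
    exact hmem _ _ (Nat.lt_succ_of_le (Finset.le_sup hy))
  obtain ⟨n, hn⟩ := this
  apply hg1 (S n)
  have h1 : g (S n) ∈ Submodule.span ℂ (Set.range fun n => g (S n)) :=
    Submodule.subset_span ⟨n, rfl⟩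
  rw [hte] at h1
  exact Submodule.span_mono (fun y hy => hn y hy) h1

open Classical in
lemma zs_main_s18 {X : Type*} [AddCommGroup X] [Module ℂ X] (n : ℕ) :
    ∀ (ι : Type) [Fintype ι] [Nonempty ι] (_ : Fintype.card ι = n)
    (A : MultilinearMap ℂ (fun _ : ι => X) ℂ) (W : Submodule ℂ X)
    (_ : ¬ FiniteDimensional ℂ W),
    ∃ Y ≤ W, ¬ FiniteDimensional ℂ Y ∧ ∀ v : ι → X, (∀ i, v i ∈ Y) → A v = 0 := by
  induction n using Nat.strong_induction_on with
  | _ n IH =>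
  intro ι _ _ hcard A W hW
  -- the subspace killing mixed terms
  have mixed : ∀ (s : Finset X) (W : Submodule ℂ X), ¬ FiniteDimensional ℂ W →
      ∃ Y ≤ W, ¬ FiniteDimensional ℂ Y ∧ ∀ (P : Finset ι), P.Nonempty → P ≠ Finset.univ →
        ∀ z : ι → X, (∀ i, z i ∈ s) → ∀ y ∈ Y, A (P.piecewise (fun _ => y) z) = 0 := by
    intro s W hW
    obtain ⟨Y, h1, h2, h3⟩ := zs_family
      (κ := {P : Finset ι // P.Nonempty ∧ P ≠ Finset.univ} × (ι → s))
      (fun k Y => ∀ y ∈ Y, A (k.1.1.piecewise (fun _ => y) (fun i => (k.2 i : X))) = 0)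
      (fun k Y Z hZ hY y hy => hY y (hZ hy))
      (by
        rintro ⟨⟨P, hP, hPu⟩, z⟩ W hW
        have : Nonempty {i // i ∈ P} := hP.to_subtype
        have hlt : Fintype.card {i // i ∈ P} < n := by
          rw [← hcard, Fintype.card_coe]
          exact Finset.card_lt_univ_of_notMem
            (not_forall.1 (fun h => hPu (Finset.eq_univ_iff_forall.2 h))).choose_spec
        obtain ⟨Y, h1, h2, h3⟩ := IH _ hlt {i // i ∈ P} rfl
          (A.domDomRestrict (fun i => i ∈ P) (fun i => (z i : X))) W hW
        refine ⟨Y, h1, h2, fun y hy => ?_⟩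
        have := h3 (fun _ => y) (fun _ => hy)
        rw [MultilinearMap.domDomRestrict_apply] at this
        rw [← this]
        congr 1) W hW
    refine ⟨Y, h1, h2, fun P hP hPu z hz y hy => ?_⟩
    exact h3 (⟨P, hP, hPu⟩, fun i => ⟨z i, hz i⟩) y hy
  obtain ⟨x, S, hx, hxS, hinf⟩ := zs_seq (X := X)
    (fun s y => y ∈ W ∧ A (fun _ => y) = 0 ∧ ∀ (P : Finset ι), P.Nonempty → P ≠ Finset.univ →
        ∀ z : ι → X, (∀ i, z i ∈ s) → A (P.piecewise (fun _ => y) z) = 0)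
    (by
      intro s
      obtain ⟨Y, hYW, hYi, hY⟩ := mixed s W hW
      obtain ⟨u, huY, hus⟩ := zs_outside Y hYi s
      obtain ⟨Z, hZY, hZi, hZ⟩ := mixed (insert u s) Y hYi
      obtain ⟨v, hvZ, hvs⟩ := zs_outside Z hZi (insert u s)
      have hvY := hZY hvZ
      have hvs' : v ∉ Submodule.span ℂ (s : Set X) := fun h =>
        hvs (Submodule.span_mono (by simp) h)
      have hus' : u ∈ Submodule.span ℂ ((insert u s : Finset X) : Set X) :=
        Submodule.subset_span (by simp)
      by_cases hv0 : A (fun _ => v) = 0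
      · exact ⟨v, hvs', hYW hvY, hv0, fun P hP hPu z hz => hY P hP hPu z hz v hvY⟩
      have hpos : 0 < Fintype.card ι := Fintype.card_pos
      obtain ⟨l, hl⟩ := IsAlgClosed.exists_pow_nat_eq (-A (fun _ => u) / A (fun _ => v)) hpos
      have hyY : l • v + u ∈ Y := Y.add_mem (Y.smul_mem _ hvY) huY
      refine ⟨l • v + u, ?_, hYW hyY, ?_, fun P hP hPu z hz => hY P hP hPu z hz _ hyY⟩
      · intro h
        by_cases hl0 : l = 0
        · subst hl0; apply hus; simpa using h
        · apply hvs
          have h' := Submodule.span_mono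
            (show (s : Set X) ⊆ ((insert u s : Finset X) : Set X) by simp) h
          have h'' := (Submodule.add_mem_iff_left _ hus').1 h'
          exact (Submodule.smul_mem_iff _ hl0).1 h''
      · have e := A.map_add_univ (fun _ => l • v) (fun _ => u)
        have e0 : (fun _ : ι => l • v + u) = (fun _ => l • v) + (fun _ => u) := rfl
        rw [e0, e, Finset.sum_eq_add (Finset.univ : Finset ι) (∅ : Finset ι)
          (Finset.univ_nonempty.ne_empty)]
        · have := A.map_smul_univ (fun _ => l) (fun _ => v)
          simp only [Finset.piecewise_univ, Finset.piecewise_empty]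
          rw [this]
          simp only [Finset.prod_const, Finset.card_univ, hl, smul_eq_mul]
          field_simp
          ring
        · rintro P - ⟨hP1, hP2⟩
          exact hZ P (Finset.nonempty_iff_ne_empty.2 hP2) hP1 (fun _ => u) (by simp) (l • v)
            (Z.smul_mem _ hvZ)
        · simp
        · simp)
  refine ⟨Submodule.span ℂ (Set.range x), ?_, hinf, ?_⟩
  · rw [Submodule.span_le]
    rintro _ ⟨n, rfl⟩
    exact (hx n).1
  · intro v hv
    refine zs_span A (Set.range x) ?_ v hv
    intro v hv
    choose f hf using hv
    obtain ⟨a, ha⟩ := Finite.exists_max f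
    obtain ⟨-, hx2, hx3⟩ := hx (f a)
    by_cases hall : ∀ i, f i = f a
    · rw [← hx2]
      congr 1
      funext i
      rw [← hf i, hall i]
    · push Not at hall
      obtain ⟨b, hb⟩ := hall
      have := hx3 (Finset.univ.filter fun i => f i = f a) ⟨a, by simp⟩
        (fun h => hb (by simpa using Finset.eq_univ_iff_forall.1 h b))
        (fun i => if f i = f a then v b else v i)
        (by
          intro i
          split_ifs with h
          · rw [← hf b]; exact hxS _ _ (lt_of_le_of_ne (ha b) hb)
          · rw [← hf i]; exact hxS _ _ (lt_of_le_of_ne (ha i) h))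
      rw [← this]
      congr 1
      funext i
      by_cases h : f i = f a
      · simp [Finset.piecewise, h, ← hf i]
      · simp [Finset.piecewise, h]

/-- (Plichko–Zagorodnyuk) Let `X` be an infinite-dimensional complex Banach space and let
`P : X → ℂ` be a continuous polynomial with `P 0 = 0`, i.e., a finite sum of continuous
homogeneous polynomials of degrees `≥ 1` (each given by a continuous symmetric multilinear
form). Then there is an infinite-dimensional linear subspace `Y ⊆ X` with `P y = 0` for
every `y ∈ Y`. -/
theorem exists_infinite_dimensional_zero_subspace
    {X : Type*} [NormedAddCommGroup X] [NormedSpace ℂ X] [CompleteSpace X]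
    (hX : ¬ FiniteDimensional ℂ X) (P : X → ℂ)
    (hP : ∃ (N : ℕ) (d : Fin N → ℕ)
        (A : ∀ i, ContinuousMultilinearMap ℂ (fun _ : Fin (d i) => X) ℂ),
      (∀ i, 1 ≤ d i) ∧
      (∀ i (x : Fin (d i) → X) (σ : Equiv.Perm (Fin (d i))), A i (x ∘ σ) = A i x) ∧
      ∀ x, P x = ∑ i, A i fun _ => x) :
    ∃ Y : Submodule ℂ X, ¬ FiniteDimensional ℂ ↥Y ∧ ∀ y ∈ Y, P y = 0 := by
  obtain ⟨N, d, A, hd, -, hPA⟩ := hP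
  obtain ⟨Y, -, h2, h3⟩ := zs_family (X := X) (κ := Fin N)
    (fun k Y => ∀ y ∈ Y, A k (fun _ => y) = 0)
    (fun k Y Z hZ hY y hy => hY y (hZ hy))
    (by
      intro k W hW
      have : Nonempty (Fin (d k)) := ⟨⟨0, hd k⟩⟩
      obtain ⟨Y, h1, h2, h3⟩ := zs_main_s18 (d k) (Fin (d k)) (by simp) (A k).toMultilinearMap W hW
      exact ⟨Y, h1, h2, fun y hy => h3 (fun _ => y) (fun _ => hy)⟩)
    ⊤ (fun h => hX (by
      exact Module.Finite.equiv (Submodule.topEquiv (R := ℂ) (M := X))))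
  refine ⟨Y, h2, fun y hy => ?_⟩
  rw [hPA]
  exact Finset.sum_eq_zero fun i _ => h3 i y hy
end
end
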